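/- Every cactus graph satisfies the substructure property. -/

import Mathlib

open SimpleGraph

namespace EVC

variable {V : Type}

/-- `S` is a vertex cover of `G`. -/
def IsCover (G : SimpleGraph V) (S : Set V) : Prop :=
  ∀ ⦃u v : V⦄, G.Adj u v → u ∈ S ∨ v ∈ S

/-- A valid movement of guards from configuration `C` to configuration `C'`, witnessed by a
multiset `M` of (source, target) pairs (a bijection between the two multisets of guards):
every guard either stays in place or moves to an adjacent vertex. -/
def ValidMove (G : SimpleGraph V) (C C' : Multiset V) (M : Multiset (V × V)) : Prop :=
  M.map Prod.fst = C ∧ M.map Prod.snd = C' ∧ ∀ p ∈ M, p.1 = p.2 ∨ G.Adj p.1 p.2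

/-- A defense strategy on `G` with `k` guards: a nonempty family of vertex-cover
configurations of size `k` such that any attack on an edge can be defended by a valid
move staying within the family. -/
def IsDefense (G : SimpleGraph V) (k : ℕ) (F : Set (Multiset V)) : Prop :=
  F.Nonempty ∧
  (∀ C ∈ F, Multiset.card C = k ∧ IsCover G {v | v ∈ C}) ∧
  (∀ C ∈ F, ∀ u v : V, G.Adj u v →
    ∃ C' ∈ F, ∃ M : Multiset (V × V), ValidMove G C C' M ∧ ((u, v) ∈ M ∨ (v, u) ∈ M))

/-- The eternal vertex cover number of `G`. -/
noncomputable def evc (G : SimpleGraph V) : ℕ :=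
  sInf {k | ∃ F : Set (Multiset V), IsDefense G k F}

/-- `evc_S(G)`: the minimum number of guards of a defense strategy on `G` in which every
vertex of `S` is occupied in every configuration. -/
noncomputable def evcOn (G : SimpleGraph V) (S : Set V) : ℕ :=
  sInf {k | ∃ F : Set (Multiset V), IsDefense G k F ∧ ∀ C ∈ F, ∀ s ∈ S, s ∈ C}

/-- `C` is an eternal vertex cover configuration of `G`: it belongs to some defense strategy. -/
def IsEvcConfig (G : SimpleGraph V) (C : Multiset V) : Prop :=
  ∃ (k : ℕ) (F : Set (Multiset V)), IsDefense G k F ∧ C ∈ F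

open Classical in
/-- The number of guards of configuration `C` that lie in the set `S`. -/
noncomputable def guardsOn (C : Multiset V) (S : Set V) : ℕ :=
  Multiset.card (C.filter (fun v => v ∈ S))

/-- `G_x^+`: the graph `G` together with one new vertex (`none`) adjacent only to `x`. -/
def addPendant (G : SimpleGraph V) (x : V) : SimpleGraph (Option V) :=
  SimpleGraph.fromRel (fun a b =>
    (∃ u w : V, a = some u ∧ b = some w ∧ G.Adj u w) ∨ (a = none ∧ b = some x))

/-- The induced subgraph of `G` obtained by deleting the vertex `x`. -/
abbrev delVert (G : SimpleGraph V) (x : V) : SimpleGraph {v : V | v ≠ x} :=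
  G.induce {v : V | v ≠ x}

/-- `x` is a cut vertex of `G`: deleting `x` separates two vertices that were connected. -/
def IsCutVertex (G : SimpleGraph V) (x : V) : Prop :=
  ∃ (u v : V) (hu : u ≠ x) (hv : v ≠ x), G.Reachable u v ∧
    ¬ (delVert G x).Reachable ⟨u, hu⟩ ⟨v, hv⟩

/-- `G` is Type 1 with respect to `x`: `evc(G_x^+) = evc_x(G)`. -/
def Type1 (G : SimpleGraph V) (x : V) : Prop := evc (addPendant G x) = evcOn G {x}

/-- `G` is Type 2 with respect to `x`: `evc(G_x^+) > evc_x(G)`. -/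
def Type2 (G : SimpleGraph V) (x : V) : Prop := evcOn G {x} < evc (addPendant G x)

/-- The vertex set of the `x`-component of `G` corresponding to the connected component `H`
of `G − x`: the vertices of `H` together with `x`. -/
def xCompSet (G : SimpleGraph V) (x : V) (H : (delVert G x).ConnectedComponent) : Set V :=
  insert x (Subtype.val '' H.supp)

lemma x_mem_xCompSet (G : SimpleGraph V) (x : V) (H : (delVert G x).ConnectedComponent) :
    x ∈ xCompSet G x H := Set.mem_insert _ _

/-- `evc_x(G_i)` for the `x`-component `G_i` of `G` corresponding to `H`. -/
noncomputable def evcComp (G : SimpleGraph V) (x : V)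
    (H : (delVert G x).ConnectedComponent) : ℕ :=
  evcOn (G.induce (xCompSet G x H)) {(⟨x, x_mem_xCompSet G x H⟩ : ↥(xCompSet G x H))}

/-- The `x`-component of `G` corresponding to `H` is Type 1 with respect to `x`. -/
def CompType1 (G : SimpleGraph V) (x : V) (H : (delVert G x).ConnectedComponent) : Prop :=
  Type1 (G.induce (xCompSet G x H)) ⟨x, x_mem_xCompSet G x H⟩

/-- The `x`-component of `G` corresponding to `H` is Type 2 with respect to `x`. -/
def CompType2 (G : SimpleGraph V) (x : V) (H : (delVert G x).ConnectedComponent) : Prop :=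
  Type2 (G.induce (xCompSet G x H)) ⟨x, x_mem_xCompSet G x H⟩

/-- The substructure property: for every non-cut vertex `x` of `G` and every `x`-extension
`G'` of `G` (i.e. every connected graph `G'` having `G` as an `x`-component, via an
isomorphism `φ` identifying `x` with a cut vertex `x'` of `G'`), every eternal vertex cover
configuration of `G'` has at least `evc_x(G) − 1` guards on the copy of `V(G)` in case
`evc(G_x^+) ≤ evc_x(G)`, and at least `evc_x(G)` guards on it in case
`evc(G_x^+) > evc_x(G)`. -/
def SubstructureProperty (G : SimpleGraph V) : Prop :=
  ∀ x : V, ¬ IsCutVertex G x →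
  ∀ (V' : Type) [Finite V'], ∀ (G' : SimpleGraph V') (x' : V'),
    G'.Connected → IsCutVertex G' x' →
  ∀ (H : (delVert G' x').ConnectedComponent) (φ : G ≃g G'.induce (xCompSet G' x' H)),
    (φ x : ↥(xCompSet G' x' H)).1 = x' →
  ∀ C' : Multiset V', IsEvcConfig G' C' →
    (evc (addPendant G x) ≤ evcOn G {x} →
        evcOn G {x} - 1 ≤ guardsOn C' (xCompSet G' x' H)) ∧
    (evcOn G {x} < evc (addPendant G x) →
        evcOn G {x} ≤ guardsOn C' (xCompSet G' x' H))

/-- The `x`-component corresponding to `H` is edge-disjoint from (the induced subgraph on)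
the vertex set `S`. -/
def EdgeDisjointComp (G : SimpleGraph V) (S : Set V) (x : V)
    (H : (delVert G x).ConnectedComponent) : Prop :=
  ∀ u v : V, G.Adj u v → u ∈ S → v ∈ S →
    ¬(u ∈ xCompSet G x H ∧ v ∈ xCompSet G x H)

/-- The components attached to the vertex set `S` (of a block or a path): pairs `(x, H)`
with `x ∈ X ∩ S` a cut vertex on `S` and `H` a component of `G − x` whose `x`-component
is edge-disjoint from `S`. -/
def SComponents (G : SimpleGraph V) (X S : Set V) :
    Set (Σ x : V, (delVert G x).ConnectedComponent) :=
  {p | p.1 ∈ X ∧ p.1 ∈ S ∧ EdgeDisjointComp G S p.1 p.2}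

/-- `χ(G, S)` where `S` is the vertex set of a block or a path of `G` and `X` is the set
of cut vertices of `G`. -/
noncomputable def chi (G : SimpleGraph V) (X S : Set V) : ℕ :=
  Nat.card ↥(S ∩ X)
    + ∑ᶠ p ∈ {p ∈ SComponents G X S | CompType1 G p.1 p.2}, (evcComp G p.1 p.2 - 2)
    + ∑ᶠ p ∈ {p ∈ SComponents G X S | CompType2 G p.1 p.2}, (evcComp G p.1 p.2 - 1)

/-- The set `S` induces a block of `G`: a maximal (vertex set of a) connected induced
subgraph having no cut vertex. -/
def IsBlock (G : SimpleGraph V) (S : Set V) : Prop :=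
  (G.induce S).Connected ∧ (∀ y : ↥S, ¬ IsCutVertex (G.induce S) y) ∧
  ∀ T : Set V, S ⊆ T → (G.induce T).Connected →
    (∀ y : ↥T, ¬ IsCutVertex (G.induce T) y) → T ⊆ S

/-- The induced subgraph of `G` on `S` is a cycle: there is a chordless cycle of `G` whose
vertex set is exactly `S`. -/
def IsCycleSet (G : SimpleGraph V) (S : Set V) : Prop :=
  ∃ (a : V) (c : G.Walk a a), c.IsCycle ∧ S = {v | v ∈ c.support} ∧
    ∀ u v : V, u ∈ c.support → v ∈ c.support → G.Adj u v → s(u, v) ∈ c.edges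

/-- `G` is chordal: every cycle of length at least four has a chord. -/
def IsChordal (G : SimpleGraph V) : Prop :=
  ∀ (a : V) (c : G.Walk a a), c.IsCycle → 4 ≤ c.length →
    ∃ u v : V, u ∈ c.support ∧ v ∈ c.support ∧ G.Adj u v ∧ s(u, v) ∉ c.edges

/-- `G` is biconnected (2-connected): connected, at least three vertices, no cut vertex. -/
def IsBiconnected (G : SimpleGraph V) : Prop :=
  G.Connected ∧ 3 ≤ Nat.card V ∧ ∀ x : V, ¬ IsCutVertex G x

/-- `G` is a cactus: connected, and any two distinct simple cycles share at most one vertex. -/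
def IsCactus (G : SimpleGraph V) : Prop :=
  G.Connected ∧
  ∀ (a b : V) (c₁ : G.Walk a a) (c₂ : G.Walk b b), c₁.IsCycle → c₂.IsCycle →
    {e | e ∈ c₁.edges} ≠ {e | e ∈ c₂.edges} →
    {v | v ∈ c₁.support ∧ v ∈ c₂.support}.Subsingleton

/-- `mvc_S(G)`: minimum cardinality of a vertex cover of `G` containing all vertices of `S`. -/
noncomputable def mvcOn (G : SimpleGraph V) (S : Set V) : ℕ :=
  sInf {k | ∃ T : Set V, IsCover G T ∧ S ⊆ T ∧ Nat.card ↥T = k}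

/-- `P` is an induced path of `G`. -/
def IsInducedPath (G : SimpleGraph V) {a b : V} (P : G.Walk a b) : Prop :=
  P.IsPath ∧ ∀ u v : V, u ∈ P.support → v ∈ P.support → G.Adj u v → s(u, v) ∈ P.edges

/-- `P` is obtained by removing one edge from an induced cycle of `G`. -/
def IsInducedCycleMinusEdge (G : SimpleGraph V) {a b : V} (P : G.Walk a b) : Prop :=
  P.IsPath ∧ 2 ≤ P.length ∧ G.Adj a b ∧
    ∀ u v : V, u ∈ P.support → v ∈ P.support → G.Adj u v →
      (s(u, v) ∈ P.edges ∨ s(u, v) = s(a, b))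

open Classical in
/-- `P` is an eventful path of `G` (with `X` the set of cut vertices of `G`): it is an
induced path or an induced cycle minus an edge, its endpoints lie in `X`, and every
(contiguous) subpath of `P` with both endpoints in `X` has an even number of vertices
outside `X`. -/
def Eventful (G : SimpleGraph V) (X : Set V) {a b : V} (P : G.Walk a b) : Prop :=
  (IsInducedPath G P ∨ IsInducedCycleMinusEdge G P) ∧ a ∈ X ∧ b ∈ X ∧
    ∀ i j : Fin P.support.length, (i : ℕ) ≤ (j : ℕ) →
      P.support.get i ∈ X → P.support.get j ∈ X →
      Even (Multiset.countP (fun v => v ∉ X)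
        (((P.support.drop (i : ℕ)).take ((j : ℕ) - (i : ℕ) + 1) : List V) : Multiset V))

/-- The vertex bunch `VB_G(P)` of the path `P`: `V(P)` together with all vertices of the
`P`-components. -/
def vertexBunch (G : SimpleGraph V) (X : Set V) {a b : V} (P : G.Walk a b) : Set V :=
  {v | v ∈ P.support} ∪
    ⋃ p ∈ SComponents G X {v | v ∈ P.support}, xCompSet G p.1 p.2

/-- Legal movement of tokens along a ring: `r i` tokens go from `i` to `i+1`, and `l i` tokens
go from `i+1` to `i`. -/
structure Leg {n : ℕ} (q q' r l : Fin (n + 1) → ℕ) : Prop where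
  bal : ∀ i, q' i + (r i + l (i - 1)) = q i + (r (i - 1) + l i)
  le : ∀ i, r i + l (i - 1) ≤ q i
  le1 : ∀ i, r i + l (i - 1) ≤ 1

lemma exists_flip {n : ℕ} (Fl : Fin (n + 1) → Bool)
    (hev : Even (Finset.univ.filter (fun k => Fl k = true)).card) :
    ∃ g : Fin (n + 1) → Bool, ∀ i, (g i ^^ g (i - 1)) = Fl i := by
  refine ⟨fun i => decide (Odd (Finset.univ.filter (fun k => k ≤ i ∧ Fl k = true)).card), ?_⟩
  intro i
  induction i using Fin.cases with
  | zero =>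
    have h1 : (0 : Fin (n + 1)) - 1 = Fin.last n := by
      ext; simp [Fin.coe_sub_one]
    have h2 : (Finset.univ.filter (fun k : Fin (n + 1) => k ≤ Fin.last n ∧ Fl k = true))
        = Finset.univ.filter (fun k => Fl k = true) := by
      ext k; simp [Fin.le_last]
    have h3 : (Finset.univ.filter (fun k : Fin (n + 1) => k ≤ 0 ∧ Fl k = true))
        = if Fl 0 = true then {0} else ∅ := by
      ext k
      by_cases h : Fl 0 = true <;> simp [h]
      · rintro rfl; exact h
      · rintro rfl; simpa using h
    simp only [h1, h2, h3]
    have h4 : ¬ Odd (Finset.univ.filter (fun k => Fl k = true)).card := by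
      simpa using hev
    by_cases h : Fl 0 = true <;> simp [h, h4]
  | succ k =>
    have h1 : k.succ - 1 = k.castSucc := by
      ext; simp [Fin.coe_sub_one]
    have h3 : (Finset.univ.filter (fun m : Fin (n + 1) => m ≤ k.succ ∧ Fl m = true))
        = (if Fl k.succ = true then {k.succ} else ∅) ∪
          (Finset.univ.filter (fun m : Fin (n + 1) => m ≤ k.castSucc ∧ Fl m = true)) := by
      ext m
      have : m ≤ k.succ ↔ m = k.succ ∨ m ≤ k.castSucc := by
        simp only [Fin.le_def, Fin.ext_iff, Fin.val_succ, Fin.val_castSucc]; omega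
      by_cases h : Fl k.succ = true
      · simp only [h, if_true, Finset.mem_filter, Finset.mem_union, Finset.mem_singleton,
          Finset.mem_univ, true_and, this]
        constructor
        · rintro ⟨h1 | h1, h2⟩
          · exact Or.inl h1
          · exact Or.inr ⟨h1, h2⟩
        · rintro (h1 | h1)
          · subst h1; exact ⟨Or.inl rfl, h⟩
          · exact ⟨Or.inr h1.1, h1.2⟩
      · simp only [h, Finset.mem_filter, Finset.mem_union,
          Finset.mem_univ, true_and, this]
        constructor
        · rintro ⟨h1 | h1, h2⟩
          · subst h1; exact absurd h2 h
          · exact Or.inr ⟨h1, h2⟩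
        · rintro (h1 | h1)
          · simp at h1
          · exact ⟨Or.inr h1.1, h1.2⟩
    have hd : Disjoint (if Fl k.succ = true then {k.succ} else ∅ : Finset (Fin (n + 1)))
          (Finset.univ.filter (fun m : Fin (n + 1) => m ≤ k.castSucc ∧ Fl m = true)) := by
      split_ifs
      · simp [Fin.le_def]
      · simp
    simp only [h1, h3, Finset.card_union_of_disjoint hd]
    by_cases h : Fl k.succ = true <;> simp [h, Nat.odd_add]
    generalize (Finset.univ.filter (fun m : Fin (n + 1) => m ≤ k.castSucc ∧ Fl m = true)).card = a
    rw [← Nat.not_even_iff_odd]; tauto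

lemma exists_arc {n : ℕ} (h j : Fin (n + 1)) (hj : j ≠ h) :
    ∃ χ : Fin (n + 1) → Bool, χ h = true ∧ χ (h - 1) = false ∧ χ j = false ∧ χ (j - 1) = true ∧
      ∀ i, i ≠ h → i ≠ j → χ i = χ (i - 1) := by
  refine ⟨fun i => if (h : ℕ) < j then decide ((h : ℕ) ≤ i ∧ (i : ℕ) < j)
    else decide (¬ ((j : ℕ) ≤ i ∧ (i : ℕ) < h)), ?_⟩
  have hne : (j : ℕ) ≠ h := fun e => hj (Fin.ext e)
  have hs : ∀ i : Fin (n + 1), ((i : ℕ) = 0 ∧ ((i - 1 : Fin (n + 1)) : ℕ) = n) ∨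
      (((i - 1 : Fin (n + 1)) : ℕ) + 1 = i) := by
    intro i
    rw [Fin.coe_sub_one]
    by_cases h : i = 0
    · simp [h]
    · have : (i : ℕ) ≠ 0 := fun e => h (Fin.ext e)
      simp [h]; omega
  have hh := h.2
  have hjj := j.2
  have s1 := hs h
  have s2 := hs j
  refine ⟨?_, ?_, ?_, ?_, ?_⟩
  · by_cases hlt : (h : ℕ) < j <;> simp [hlt] <;> omega
  · by_cases hlt : (h : ℕ) < j <;> simp only [hlt, if_true, if_false, decide_eq_false_iff_not] <;> omega
  · by_cases hlt : (h : ℕ) < j <;> simp only [hlt, if_true, if_false, decide_eq_false_iff_not] <;> omega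
  · by_cases hlt : (h : ℕ) < j <;> simp only [hlt, if_true, if_false, decide_eq_true_eq] <;> omega
  · intro i h1 h2
    have h1' : (i : ℕ) ≠ h := fun e => h1 (Fin.ext e)
    have h2' : (i : ℕ) ≠ j := fun e => h2 (Fin.ext e)
    have hi := i.2
    have s3 := hs i
    by_cases hlt : (h : ℕ) < j <;> simp only [hlt, if_true, if_false, decide_eq_decide] <;> omega

/-- Does the ring state flip at a position? -/
def fl (rp ih p : Bool) : Bool := bif rp then (ih && p) else true

/-- Ring occupancy at a position. -/
def fq (rp ih p gp : Bool) : ℕ :=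
  bif rp then (bif ih then (bif p then (bif gp then 2 else 1) else 2) else 1)
  else (bif gp then 1 else 0)

/-- Validity of a ring state. -/
def RV {n : ℕ} (rep : Fin (n + 1) → Bool) (p : Bool) (h : Fin (n + 1)) (g : Fin (n + 1) → Bool) :
    Prop :=
  rep h = true ∧ ∀ i, (g i ^^ g (i - 1)) = fl (rep i) (decide (i = h)) p

/-- Ring occupancy of a state. -/
def rq {n : ℕ} (rep : Fin (n + 1) → Bool) (p : Bool) (h : Fin (n + 1)) (g : Fin (n + 1) → Bool)
    (i : Fin (n + 1)) : ℕ :=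
  fq (rep i) (decide (i = h)) p (g (i - 1))

section ring

variable {n : ℕ} {rep : Fin (n + 1) → Bool} {p : Bool} {h : Fin (n + 1)} {g : Fin (n + 1) → Bool}

lemma RV.compl (H : RV rep p h g) : RV rep p h (fun i => !g i) := by
  refine ⟨H.1, fun i => ?_⟩
  rw [← H.2 i]; show ((!g i) ^^ (!g (i - 1))) = _
  cases g i <;> cases g (i - 1) <;> rfl

lemma RV.right (H : RV rep p h g) :
    Leg (rq rep p h g) (rq rep p h (fun i => !g i)) (fun i => (!g i).toNat) (fun _ => 0) := by
  have key : ∀ (rp ih p gi gp : Bool), (gi ^^ gp) = fl rp ih p →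
      fq rp ih p (!gp) + ((!gi).toNat + 0) = fq rp ih p gp + ((!gp).toNat + 0) ∧
      (!gi).toNat + 0 ≤ fq rp ih p gp ∧ (!gi).toNat + 0 ≤ 1 := by decide
  exact ⟨fun i => (key _ _ _ _ _ (H.2 i)).1, fun i => (key _ _ _ _ _ (H.2 i)).2.1,
    fun i => (key _ _ _ _ _ (H.2 i)).2.2⟩

lemma RV.left (H : RV rep p h g) :
    Leg (rq rep p h g) (rq rep p h (fun i => !g i)) (fun _ => 0) (fun i => (g i).toNat) := by
  have key : ∀ (rp ih p gi gp : Bool), (gi ^^ gp) = fl rp ih p →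
      fq rp ih p (!gp) + (0 + (gp).toNat) = fq rp ih p gp + (0 + (gi).toNat) ∧
      0 + (gp).toNat ≤ fq rp ih p gp ∧ 0 + (gp).toNat ≤ 1 := by decide
  exact ⟨fun i => (key _ _ _ _ _ (H.2 i)).1, fun i => (key _ _ _ _ _ (H.2 i)).2.1,
    fun i => (key _ _ _ _ _ (H.2 i)).2.2⟩

lemma RV.transfer (H : RV rep p h g) {j : Fin (n + 1)} (hj : rep j = true) (hjh : j ≠ h) :
    ∃ g' r l, RV rep p j g' ∧ Leg (rq rep p h g) (rq rep p j g') r l ∧ rq rep p j g' j = 2 ∧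
      r j + l (j - 1) = 0 := by
  obtain ⟨χ, c1, c2, c3, c4, c5⟩ := exists_arc h j hjh
  have Hh := H.1
  have key : ∀ i, (decide (i = h) = true ∧ rep i = true ∧ decide (i = j) = false ∧ χ i = true ∧
        χ (i - 1) = false) ∨
      (decide (i = j) = true ∧ rep i = true ∧ decide (i = h) = false ∧ χ i = false ∧
        χ (i - 1) = true) ∨
      (decide (i = h) = false ∧ decide (i = j) = false ∧ χ i = χ (i - 1)) := by
    intro i
    by_cases e : i = h
    · subst e; exact Or.inl ⟨by simp, Hh, by simpa using fun e => hjh e.symm, c1, c2⟩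
    · by_cases e' : i = j
      · subst e'; exact Or.inr (Or.inl ⟨by simp, hj, by simpa using hjh, c3, c4⟩)
      · exact Or.inr (Or.inr ⟨by simpa using e, by simpa using e', c5 i e e'⟩)
  have Hj : g j = g (j - 1) := by
    have := H.2 j
    simpa [hj, hjh, fl] using this
  cases p with
  | false =>
    have key2 : ∀ (rp ih ij gi gp xi xp : Bool), ((ih = true ∧ rp = true ∧ ij = false ∧ xi = true ∧
        xp = false) ∨ (ij = true ∧ rp = true ∧ ih = false ∧ xi = false ∧ xp = true) ∨
        (ih = false ∧ ij = false ∧ xi = xp)) → (gi ^^ gp) = fl rp ih false →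
      ((!gi) ^^ (!gp)) = fl rp ij false ∧
      fq rp ij false (!gp) + ((xi && !gi).toNat + (!xp && gp).toNat) =
        fq rp ih false gp + ((xp && !gp).toNat + (!xi && gi).toNat) ∧
      (xi && !gi).toNat + (!xp && gp).toNat ≤ fq rp ih false gp ∧
      (xi && !gi).toNat + (!xp && gp).toNat ≤ 1 := by intro rp ih ij; cases rp <;> cases ih <;> cases ij <;> decide
    refine ⟨fun i => !g i, fun i => (χ i && !g i).toNat, fun i => (!χ i && g i).toNat,
      ⟨hj, fun i => (key2 _ _ _ _ _ _ _ (key i) (H.2 i)).1⟩,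
      ⟨fun i => (key2 _ _ _ _ _ _ _ (key i) (H.2 i)).2.1,
       fun i => (key2 _ _ _ _ _ _ _ (key i) (H.2 i)).2.2.1,
       fun i => (key2 _ _ _ _ _ _ _ (key i) (H.2 i)).2.2.2⟩, ?_, ?_⟩
    · simp [rq, fq, hj]
    · simp [c3, c4]
  | true =>
    cases hγ : g j with
    | false =>
      have key2 : ∀ (rp ih ij gi gp xi xp : Bool), ((ih = true ∧ rp = true ∧ ij = false ∧ xi = true ∧
          xp = false) ∨ (ij = true ∧ rp = true ∧ ih = false ∧ xi = false ∧ xp = true) ∨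
          (ih = false ∧ ij = false ∧ xi = xp)) → (gi ^^ gp) = fl rp ih true →
        ((bif xi then !gi else gi) ^^ (bif xp then !gp else gp)) = fl rp ij true ∧
        (ij = true → gi = false → gp = false) ∧
        ((ij = true → gi = false) → fq rp ij true (bif xp then !gp else gp) + ((xi && !gi).toNat + 0) =
          fq rp ih true gp + ((xp && !gp).toNat + 0)) ∧
        (xi && !gi).toNat + 0 ≤ fq rp ih true gp ∧
        (xi && !gi).toNat + 0 ≤ 1 := by intro rp ih ij; cases rp <;> cases ih <;> cases ij <;> decide
      have hij : ∀ i, decide (i = j) = true → g i = false := by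
        intro i hi; rw [of_decide_eq_true hi, hγ]
      refine ⟨fun i => bif χ i then !g i else g i, fun i => (χ i && !g i).toNat, fun i => 0,
        ⟨hj, fun i => (key2 _ _ _ _ _ _ _ (key i) (H.2 i)).1⟩,
        ⟨fun i => (key2 _ _ _ _ _ _ _ (key i) (H.2 i)).2.2.1 (hij i),
         fun i => (key2 _ _ _ _ _ _ _ (key i) (H.2 i)).2.2.2.1,
         fun i => (key2 _ _ _ _ _ _ _ (key i) (H.2 i)).2.2.2.2⟩, ?_, ?_⟩
      · simp [rq, fq, hj, c4, ← Hj, hγ]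
      · simp [c3]
    | true =>
      have key2 : ∀ (rp ih ij gi gp xi xp : Bool), ((ih = true ∧ rp = true ∧ ij = false ∧ xi = true ∧
          xp = false) ∨ (ij = true ∧ rp = true ∧ ih = false ∧ xi = false ∧ xp = true) ∨
          (ih = false ∧ ij = false ∧ xi = xp)) → (gi ^^ gp) = fl rp ih true →
        ((bif xi then gi else !gi) ^^ (bif xp then gp else !gp)) = fl rp ij true ∧
        ((ij = true → gi = true) → fq rp ij true (bif xp then gp else !gp) + (0 + (!xp && gp).toNat) =
          fq rp ih true gp + (0 + (!xi && gi).toNat)) ∧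
        0 + (!xp && gp).toNat ≤ fq rp ih true gp ∧
        0 + (!xp && gp).toNat ≤ 1 := by intro rp ih ij; cases rp <;> cases ih <;> cases ij <;> decide
      have hij : ∀ i, decide (i = j) = true → g i = true := by
        intro i hi; rw [of_decide_eq_true hi, hγ]
      refine ⟨fun i => bif χ i then g i else !g i, fun i => 0, fun i => (!χ i && g i).toNat,
        ⟨hj, fun i => (key2 _ _ _ _ _ _ _ (key i) (H.2 i)).1⟩,
        ⟨fun i => (key2 _ _ _ _ _ _ _ (key i) (H.2 i)).2.1 (hij i),
         fun i => (key2 _ _ _ _ _ _ _ (key i) (H.2 i)).2.2.1,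
         fun i => (key2 _ _ _ _ _ _ _ (key i) (H.2 i)).2.2.2⟩, ?_, ?_⟩
      · simp [rq, fq, hj, c4, ← Hj, hγ]
      · simp [c4]

lemma RV.sum (H : RV rep p h g)
    (hp : p = decide (Odd (Finset.univ.filter (fun i => rep i = false)).card)) :
    ∑ i, rq rep p h g i = (Finset.univ.filter (fun i => rep i = true)).card +
      (Finset.univ.filter (fun i => rep i = false)).card / 2 + 1 := by
  have key : ∀ (rp ih p gi gp : Bool), (ih = true → rp = true) → (gi ^^ gp) = fl rp ih p →
      2 * fq rp ih p gp + gi.toNat = (if rp = false then 1 else 0) + 2 * (if rp = true then 1 else 0)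
       + gp.toNat + (if ih = true then (if p then 1 else 2) else 0) := by decide
  have e1 : ∀ i, 2 * rq rep p h g i + (g i).toNat =
      (if rep i = false then 1 else 0) + 2 * (if rep i = true then 1 else 0)
       + (g (i - 1)).toNat + (if i = h then (if p then 1 else 2) else 0) := by
    intro i
    have := key (rep i) (decide (i = h)) p (g i) (g (i - 1))
      (by intro hi; rw [of_decide_eq_true hi]; exact H.1) (H.2 i)
    simpa only [decide_eq_true_eq, rq] using this
  have e2 := Finset.sum_congr (rfl : (Finset.univ : Finset (Fin (n + 1))) = Finset.univ)
    (fun i _ => e1 i)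
  simp only [Finset.sum_add_distrib, ← Finset.mul_sum] at e2
  have e3 : ∑ i : Fin (n + 1), (g (i - 1)).toNat = ∑ i : Fin (n + 1), (g i).toNat :=
    Equiv.sum_comp (Equiv.subRight (1 : Fin (n + 1))) (fun i => (g i).toNat)
  rw [e3] at e2
  simp only [Finset.sum_boole, Finset.sum_ite_eq', Finset.mem_univ, if_true, Nat.cast_id] at e2
  rcases Nat.even_or_odd (Finset.univ.filter (fun i => rep i = false)).card with ho | ho
  · have : p = false := by rw [hp]; simpa using ho
    simp only [this] at e2 ⊢
    obtain ⟨m, hm⟩ := ho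
    simp at e2
    omega
  · have : p = true := by rw [hp]; simpa using ho
    simp only [this] at e2 ⊢
    obtain ⟨m, hm⟩ := ho
    simp at e2
    omega

end ring

lemma ring_dynamics {n : ℕ} (rep : Fin (n + 1) → Bool) (h0 : rep 0 = true) :
    ∃ Q : Set (Fin (n + 1) → ℕ), Q.Nonempty ∧
      (∀ q ∈ Q, ∑ i, q i = (Finset.univ.filter (fun i => rep i = true)).card +
        (Finset.univ.filter (fun i => rep i = false)).card / 2 + 1) ∧
      (∀ q ∈ Q, ∀ i, rep i = true → q i = 1 ∨ q i = 2) ∧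
      (∀ q ∈ Q, ∀ i, 1 ≤ q i ∨ 1 ≤ q (i + 1)) ∧
      (∀ q ∈ Q, ∀ i, ∃ q' ∈ Q, ∃ r l, Leg q q' r l ∧ (1 ≤ r i ∨ 1 ≤ l i)) ∧
      (∀ q ∈ Q, ∀ j, rep j = true → q j = 1 → ∃ q' ∈ Q, ∃ r l, Leg q q' r l ∧ q' j = 2 ∧
        r j + l (j - 1) = 0) := by
  obtain ⟨p, hp⟩ : ∃ p : Bool, p = decide (Odd (Finset.univ.filter (fun i => rep i = false)).card) :=
    ⟨_, rfl⟩
  refine ⟨{q | ∃ h g, RV rep p h g ∧ q = rq rep p h g}, ?_, ?_, ?_, ?_, ?_, ?_⟩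
  · obtain ⟨g, hg⟩ := exists_flip (fun i => fl (rep i) (decide (i = 0)) p) (by
      rcases Nat.even_or_odd (Finset.univ.filter (fun i => rep i = false)).card with ho | ho
      · have : p = false := by rw [hp]; simpa using ho
        have e : (Finset.univ.filter (fun k => fl (rep k) (decide (k = 0)) p = true))
          = (Finset.univ.filter (fun i => rep i = false)) := by
          ext i
          cases hr : rep i <;> simp [this, hr, fl]
        rw [e]; exact ho
      · have : p = true := by rw [hp]; simpa using ho
        have e : (Finset.univ.filter (fun k => fl (rep k) (decide (k = 0)) p = true))
          = insert 0 (Finset.univ.filter (fun i => rep i = false)) := by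
          ext i
          by_cases e : i = 0
          · subst e; simp [this, fl, h0]
          · cases hr : rep i <;> simp [this, e, hr, fl]
        rw [e, Finset.card_insert_of_notMem (by simp [h0])]
        exact ho.add_one)
    exact ⟨_, 0, g, ⟨h0, hg⟩, rfl⟩
  · rintro q ⟨h, g, H, rfl⟩
    exact H.sum hp
  · rintro q ⟨h, g, H, rfl⟩ i hi
    have key : ∀ (ih p gp : Bool), fq true ih p gp = 1 ∨ fq true ih p gp = 2 := by decide
    simp only [rq, hi]
    exact key _ _ _
  · rintro q ⟨h, g, H, rfl⟩ i
    have h1 := H.2 i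
    have h3 : i + 1 - 1 = i := by simp
    have key : ∀ (rp rp' ih ih' p gi gp : Bool), (gi ^^ gp) = fl rp ih p →
        1 ≤ fq rp ih p gp ∨ 1 ≤ fq rp' ih' p gi := by decide
    simp only [rq, h3]
    exact key _ _ _ _ _ _ _ h1
  · rintro q ⟨h, g, H, rfl⟩ i
    cases hg : g i with
    | false => exact ⟨_, ⟨h, _, H.compl, rfl⟩, _, _, H.right, by simp [hg]⟩
    | true => exact ⟨_, ⟨h, _, H.compl, rfl⟩, _, _, H.left, by simp [hg]⟩
  · rintro q ⟨h, g, H, rfl⟩ j hj hq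
    by_cases e : j = h
    · subst e
      have key' : ∀ (p gi gp : Bool), (gi ^^ gp) = fl true true p → fq true true p gp = 1 →
        fq true true p (!gp) = 2 ∧ 0 + gp.toNat = 0 := by decide
      have h1 := H.2 j
      simp only [rq, hj, decide_true] at hq h1
      refine ⟨_, ⟨j, _, H.compl, rfl⟩, _, _, H.left, ?_, ?_⟩
      · simp only [rq, hj, decide_true]; exact (key' _ _ _ h1 hq).1
      · exact (key' _ _ _ h1 hq).2
    · obtain ⟨g', r, l, a1, a2, a3, a4⟩ := H.transfer hj e
      exact ⟨_, ⟨j, g', a1, rfl⟩, r, l, a2, a3, a4⟩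

/-- The restriction of `G` to `S`, as a graph on the same vertex type. -/
def res (G : SimpleGraph V) (S : Set V) : SimpleGraph V where
  Adj u v := G.Adj u v ∧ u ∈ S ∧ v ∈ S
  symm := ⟨fun _ _ h => ⟨h.1.symm, h.2.2, h.2.1⟩⟩
  loopless := ⟨fun u h => G.loopless.irrefl u h.1⟩

/-- `(S, x)` is a rooted piece of `G`: `S` is connected and is attached to the rest of the graph
only at `x`. -/
structure Piece (G : SimpleGraph V) (S : Set V) (x : V) : Prop where
  mem : x ∈ S
  conn : ∀ v ∈ S, (res G S).Reachable x v
  closed : ∀ u ∈ S, u ≠ x → ∀ v, G.Adj u v → v ∈ S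

/-- Ring decomposition of a piece. -/
structure Deco (G : SimpleGraph V) (S : Set V) (x : V) (n : ℕ) (c : Fin (n + 1) → V)
    (B : Fin (n + 1) → Set V) : Prop where
  c0 : c 0 = x
  mem : ∀ i, c i ∈ B i
  sub : ∀ i, B i ⊆ S
  cov : ∀ v ∈ S, ∃ i, v ∈ B i
  disj : ∀ i j v, v ∈ B i → v ∈ B j → i = j
  adj : ∀ i, G.Adj (c i) (c (i + 1))
  cross : ∀ i j u v, u ∈ B i → v ∈ B j → G.Adj u v →
    i = j ∨ (u = c i ∧ v = c j ∧ (j = i + 1 ∨ i = j + 1))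
  conn : ∀ i, ∀ v ∈ B i, (res G (B i)).Reachable (c i) v

lemma Deco.piece {G : SimpleGraph V} {S : Set V} {x : V} {n : ℕ} {c : Fin (n + 1) → V}
    {B : Fin (n + 1) → Set V} (D : Deco G S x n c B) (P : Piece G S x) (i : Fin (n + 1)) :
    Piece G (B i) (c i) := by
  refine ⟨D.mem i, D.conn i, fun u hu hne v hv => ?_⟩
  have hux : u ≠ x := by
    rintro rfl
    have := D.disj i 0 _ hu (D.c0 ▸ D.mem 0)
    subst this
    exact hne D.c0.symm
  have hvS := P.closed u (D.sub i hu) hux v hv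
  obtain ⟨j, hj⟩ := D.cov v hvS
  rcases D.cross i j u v hu hj hv with h | ⟨h, _⟩
  · subst h; exact hj
  · exact absurd h hne

open Classical in
lemma guardsOn_cons (v : V) (C : Multiset V) (S : Set V) :
    guardsOn (v ::ₘ C) S = guardsOn C S + if v ∈ S then 1 else 0 := by
  unfold guardsOn
  by_cases h : v ∈ S <;> simp [h]

lemma guardsOn_zero (S : Set V) : guardsOn (0 : Multiset V) S = 0 := by simp [guardsOn]

lemma guardsOn_mono (C : Multiset V) {S T : Set V} (h : S ⊆ T) : guardsOn C S ≤ guardsOn C T := by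
  classical
  induction C using Multiset.induction with
  | empty => simp [guardsOn_zero]
  | cons v C ih =>
    rw [guardsOn_cons, guardsOn_cons]
    by_cases h1 : v ∈ S
    · simp [h1, h h1, ih]
    · simp [h1]; omega

lemma guardsOn_union (C : Multiset V) {S T : Set V} (h : ∀ v, v ∈ S → v ∈ T → False) :
    guardsOn C (S ∪ T) = guardsOn C S + guardsOn C T := by
  classical
  induction C using Multiset.induction with
  | empty => simp [guardsOn_zero]
  | cons v C ih =>
    rw [guardsOn_cons, guardsOn_cons, guardsOn_cons, ih]
    by_cases h1 : v ∈ S <;> by_cases h2 : v ∈ T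
    · exact (h v h1 h2).elim
    all_goals simp [h1, h2]
    all_goals omega

lemma guardsOn_pos {C : Multiset V} {S : Set V} {v : V} (h : v ∈ C) (hS : v ∈ S) :
    1 ≤ guardsOn C S := by
  classical
  obtain ⟨D, rfl⟩ := Multiset.exists_cons_of_mem h
  rw [guardsOn_cons]; simp [hS]

lemma guardsOn_biUnion {ι : Type} (C : Multiset V) (T : Finset ι) (B : ι → Set V)
    (h : ∀ i j v, v ∈ B i → v ∈ B j → i = j) :
    guardsOn C {v | ∃ i ∈ T, v ∈ B i} = ∑ i ∈ T, guardsOn C (B i) := by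
  classical
  induction C using Multiset.induction with
  | empty => simp [guardsOn_zero]
  | cons v C ih =>
    simp only [guardsOn_cons, ih, Finset.sum_add_distrib]
    congr 1
    by_cases h1 : ∃ i ∈ T, v ∈ B i
    · obtain ⟨i, hi, hv⟩ := h1
      rw [if_pos ⟨i, hi, hv⟩, Finset.sum_eq_single_of_mem i hi]
      · simp [hv]
      · intro j _ hj
        rw [if_neg]; intro hv'; exact hj (h j i v hv' hv)
    · rw [if_neg (show v ∉ {v | ∃ i ∈ T, v ∈ B i} from h1)]; symm
      apply Finset.sum_eq_zero
      intro i hi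
      rw [if_neg]; intro hv; exact h1 ⟨i, hi, hv⟩

lemma no_inflow_le (M : Multiset (V × V)) (R : Set V) (h : ∀ p ∈ M, p.2 ∈ R → p.1 ∈ R) :
    guardsOn (M.map Prod.snd) R ≤ guardsOn (M.map Prod.fst) R := by
  classical
  induction M using Multiset.induction with
  | empty => simp
  | cons p M ih =>
    simp only [Multiset.map_cons, guardsOn_cons]
    have := ih (fun q hq => h q (Multiset.mem_cons_of_mem hq))
    by_cases h1 : p.2 ∈ R
    · simp [h1, h p (Multiset.mem_cons_self _ _) h1, this]
    · simp [h1]; omega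

lemma no_inflow_lt (M : Multiset (V × V)) (R : Set V) (h : ∀ p ∈ M, p.2 ∈ R → p.1 ∈ R)
    {p : V × V} (hp : p ∈ M) (h1 : p.1 ∈ R) (h2 : p.2 ∉ R) :
    guardsOn (M.map Prod.snd) R + 1 ≤ guardsOn (M.map Prod.fst) R := by
  classical
  obtain ⟨M, rfl⟩ := Multiset.exists_cons_of_mem hp
  simp only [Multiset.map_cons, guardsOn_cons]
  have := no_inflow_le M R (fun q hq => h q (Multiset.mem_cons_of_mem hq))
  simp [h1, h2]; omega

/-- Attack on an edge `uw` with `u` empty and no guard able to enter `R ∋ w`. -/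
lemma attack_lt {G : SimpleGraph V} {k : ℕ} {F : Set (Multiset V)} (hF : IsDefense G k F)
    {C : Multiset V} (hC : C ∈ F) {u w : V} (huw : G.Adj u w) (hu : u ∉ C) (R : Set V)
    (huR : u ∉ R) (hwR : w ∈ R)
    (hin : ∀ s t, t ∈ R → s ∉ R → G.Adj s t → s ∉ C) :
    ∃ C' ∈ F, guardsOn C' R + 1 ≤ guardsOn C R := by
  obtain ⟨C', hC', M, ⟨m1, m2, m3⟩, hM⟩ := hF.2.2 C hC u w huw
  refine ⟨C', hC', ?_⟩
  have hwu : (w, u) ∈ M := by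
    rcases hM with h | h
    · exact absurd (m1 ▸ Multiset.mem_map_of_mem Prod.fst h) hu
    · exact h
  have := no_inflow_lt M R (fun p hp h2 => by
    by_contra h1
    rcases m3 p hp with h | h
    · exact h1 (h ▸ h2)
    · exact hin _ _ h2 h1 h (m1 ▸ Multiset.mem_map_of_mem Prod.fst hp)) hwu hwR huR
  rwa [m1, m2] at this

lemma Piece.exists_nbr {G : SimpleGraph V} {S : Set V} {x : V} (P : Piece G S x)
    (hS : S ≠ {x}) : ∃ w ∈ S, G.Adj x w := by
  obtain ⟨v, hv, hne⟩ : ∃ v ∈ S, v ≠ x := by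
    by_contra h
    push Not at h
    exact hS (Set.eq_singleton_iff_unique_mem.2 ⟨P.mem, h⟩)
  obtain ⟨p⟩ := P.conn v hv
  cases p with
  | nil => exact absurd rfl hne
  | cons h p => exact ⟨_, h.2.2, h.1⟩

lemma total_lb {G : SimpleGraph V} {S : Set V} {x : V} (P : Piece G S x) (hS : S ≠ {x})
    {k : ℕ} {F : Set (Multiset V)} (hF : IsDefense G k F) {a : ℕ}
    (ha : ∀ C ∈ F, a ≤ guardsOn C (S \ {x})) : ∀ C ∈ F, a + 1 ≤ guardsOn C S := by
  intro C hC
  have hsplit : guardsOn C S = guardsOn C (S \ {x}) + guardsOn C {x} := by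
    rw [← guardsOn_union]
    · congr 1; ext v
      by_cases h : v = x
      · subst h; simp [P.mem]
      · simp [h]
    · intro v h1 h2; exact h1.2 h2
  by_cases hx : x ∈ C
  · have := guardsOn_pos hx (Set.mem_singleton x)
    have := ha C hC
    omega
  · obtain ⟨w, hw, hxw⟩ := P.exists_nbr hS
    obtain ⟨C', hC', h⟩ := attack_lt hF hC hxw hx (S \ {x}) (by simp) ⟨hw, fun h => hxw.ne h.symm⟩ (by
      intro s t ht hs hst
      have : s ∈ S := P.closed t ht.1 ht.2 s hst.symm
      have : s = x := by by_contra h; exact hs ⟨this, h⟩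
      rwa [this])
    have := ha C' hC'
    omega

lemma pair_sum (n : ℕ) (N : ℕ → Bool) (w s : ℕ → ℕ) (hws : ∀ k, w k ≤ s k)
    (h2 : ∀ i j, 1 ≤ i → i < j → j ≤ n → N i = true → N j = true →
      ∑ k ∈ Finset.Ico i (j + 1), w k + 1 ≤ ∑ k ∈ Finset.Ico i (j + 1), s k) :
    ∑ k ∈ Finset.Ico 1 (n + 1), w k + (∑ k ∈ Finset.Ico 1 (n + 1), (N k).toNat) / 2 ≤
      ∑ k ∈ Finset.Ico 1 (n + 1), s k := by
  have main : ∀ j, j ≤ n →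
      ((∑ k ∈ Finset.Ico 1 (j + 1), (N k).toNat) % 2 = 0 ∧
        ∑ k ∈ Finset.Ico 1 (j + 1), w k + (∑ k ∈ Finset.Ico 1 (j + 1), (N k).toNat) / 2 ≤
          ∑ k ∈ Finset.Ico 1 (j + 1), s k) ∨
      ((∑ k ∈ Finset.Ico 1 (j + 1), (N k).toNat) % 2 = 1 ∧ ∃ i, 1 ≤ i ∧ i ≤ j ∧ N i = true ∧
        ∑ k ∈ Finset.Ico 1 i, w k + (∑ k ∈ Finset.Ico 1 (j + 1), (N k).toNat) / 2 ≤
          ∑ k ∈ Finset.Ico 1 i, s k) := by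
    intro j
    induction j with
    | zero => intro _; left; simp
    | succ j ih =>
      intro hj
      have ew := Finset.sum_Ico_succ_top (show 1 ≤ j + 1 by omega) w
      have es := Finset.sum_Ico_succ_top (show 1 ≤ j + 1 by omega) s
      have eN := Finset.sum_Ico_succ_top (show 1 ≤ j + 1 by omega) (fun k => (N k).toNat)
      have hw := hws (j + 1)
      cases hN : N (j + 1) with
      | false =>
        simp only [hN, Bool.toNat_false, add_zero] at eN
        rcases ih (by omega) with ⟨h, h'⟩ | ⟨h, i, h1, h2, h3, h4⟩
        · left; rw [eN]; exact ⟨h, by omega⟩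
        · right; rw [eN]; exact ⟨h, i, h1, by omega, h3, h4⟩
      | true =>
        simp only [hN, Bool.toNat_true] at eN
        rcases ih (by omega) with ⟨h, h'⟩ | ⟨h, i, h1, h3, h4, h5⟩
        · right; rw [eN]; refine ⟨by omega, j + 1, by omega, le_refl _, hN, by omega⟩
        · left; rw [eN]; refine ⟨by omega, ?_⟩
          have := h2 i (j + 1) h1 (by omega) hj h4 hN
          have e1 := Finset.sum_Ico_consecutive w h1 (show i ≤ j + 1 + 1 by omega)
          have e2 := Finset.sum_Ico_consecutive s h1 (show i ≤ j + 1 + 1 by omega)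
          omega
  rcases main n le_rfl with ⟨h, h'⟩ | ⟨h, i, h1, h3, h4, h5⟩
  · exact h'
  · have e1 := Finset.sum_Ico_consecutive w h1 (show i ≤ n + 1 by omega)
    have e2 := Finset.sum_Ico_consecutive s h1 (show i ≤ n + 1 by omega)
    have := Finset.sum_le_sum (s := Finset.Ico i (n + 1)) (fun k _ => hws k)
    omega

lemma Deco.pair {G : SimpleGraph V} {S : Set V} {x : V} {n : ℕ} {c : Fin (n + 1) → V}
    {B : Fin (n + 1) → Set V} (D : Deco G S x n c B) (P : Piece G S x)
    {k : ℕ} {F : Set (Multiset V)} (hF : IsDefense G k F) (w : Fin (n + 1) → ℕ)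
    (hw : ∀ C ∈ F, ∀ i, i ≠ 0 → w i ≤ guardsOn C (B i)) (i j : Fin (n + 1)) (hi0 : i ≠ 0) (hij : i < j)
    (hwi : w i = 0) (hwj : w j = 0) {C : Multiset V} (hC : C ∈ F) :
    ∑ k ∈ Finset.Icc i j, w k + 1 ≤ ∑ k ∈ Finset.Icc i j, guardsOn C (B k) := by
  have hpos : ∀ k ∈ Finset.Icc i j, k ≠ 0 := by
    intro k hk h0
    rw [Finset.mem_Icc] at hk
    apply hi0; subst h0; exact le_antisymm hk.1 (Fin.zero_le _)
  by_contra hcon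
  have htight : ∀ k ∈ Finset.Icc i j, w k = guardsOn C (B k) := by
    have h1 : ∑ k ∈ Finset.Icc i j, w k = ∑ k ∈ Finset.Icc i j, guardsOn C (B k) :=
      le_antisymm (Finset.sum_le_sum (fun k hk => hw C hC k (hpos k hk))) (by omega)
    exact (Finset.sum_eq_sum_iff_of_le (fun k hk => hw C hC k (hpos k hk))).1 h1
  have hci : c i ∉ C := fun h => by
    have := guardsOn_pos h (D.mem i)
    rw [← htight i (Finset.mem_Icc.2 ⟨le_rfl, hij.le⟩), hwi] at this
    omega
  have hcj : c j ∉ C := fun h => by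
    have := guardsOn_pos h (D.mem j)
    rw [← htight j (Finset.mem_Icc.2 ⟨hij.le, le_rfl⟩), hwj] at this
    omega
  have hne : i ≠ Fin.last n := fun h => by
    rw [h] at hij; exact absurd hij (not_lt.2 (Fin.le_last j))
  have hi1 : ((i + 1 : Fin (n + 1)) : ℕ) = i + 1 := Fin.val_add_one_of_lt (Fin.lt_last_iff_ne_last.2 hne)
  by_cases hj1 : j = i + 1
  · have := (hF.2.1 C hC).2 (D.adj i)
    rw [← hj1] at this
    rcases this with h | h
    · exact hci h
    · exact hcj h
  have hj1' : (j : ℕ) ≠ i + 1 := fun h => hj1 (Fin.ext (by rw [h, hi1]))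
  have hij' : (i : ℕ) < j := hij
  obtain ⟨C', hC', h⟩ := attack_lt hF hC (D.adj i) hci {v | ∃ k ∈ Finset.Ioo i j, v ∈ B k}
    (by
      rintro ⟨k, hk, hv⟩
      have := D.disj _ _ _ (D.mem i) hv
      subst this
      simp at hk)
    ⟨i + 1, by
      rw [Finset.mem_Ioo]
      exact ⟨Fin.lt_def.2 (by rw [hi1]; omega), Fin.lt_def.2 (by rw [hi1]; omega)⟩, D.mem _⟩
    (by
      rintro s t ⟨k, hk, ht⟩ hs hst
      rw [Finset.mem_Ioo] at hk
      have hk0 : k ≠ 0 := by rintro rfl; exact absurd hk.1 (Fin.not_lt_zero _)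
      have htx : t ≠ x := by
        rintro rfl
        exact hk0 (D.disj k 0 _ ht (D.c0 ▸ D.mem 0))
      obtain ⟨m, hm⟩ := D.cov s (P.closed t (D.sub k ht) htx s hst.symm)
      have hmI : ¬ (i < m ∧ m < j) := fun h => hs ⟨m, Finset.mem_Ioo.2 h, hm⟩
      rcases D.cross k m t s ht hm hst.symm with h | ⟨h1, h2, h3⟩
      · subst h; exact absurd hk hmI
      · subst h2
        have hki : (i : ℕ) < k := hk.1
        have hkj : (k : ℕ) < j := hk.2
        have hj2 := j.2
        have hmI' : ¬ ((i : ℕ) < m ∧ (m : ℕ) < j) := hmI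
        rcases h3 with h3 | h3
        · have : (m : ℕ) = k + 1 := by
            rw [h3]; exact Fin.val_add_one_of_lt (Fin.lt_def.2 (by simp; omega))
          have : m = j := Fin.ext (by omega)
          rw [this]; exact hcj
        · by_cases hml : m = Fin.last n
          · subst hml; exact absurd (by rw [h3, Fin.last_add_one]) hk0
          · have : (k : ℕ) = m + 1 := by
              rw [h3]; exact Fin.val_add_one_of_lt (Fin.lt_last_iff_ne_last.2 hml)
            have : m = i := Fin.ext (by omega)
            rw [this]; exact hci)
  rw [guardsOn_biUnion _ _ _ D.disj, guardsOn_biUnion _ _ _ D.disj] at h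
  have hsub : ∀ k ∈ Finset.Ioo i j, k ∈ Finset.Icc i j := fun k hk => Finset.Ioo_subset_Icc_self hk
  have e1 : ∑ k ∈ Finset.Ioo i j, guardsOn C (B k) = ∑ k ∈ Finset.Ioo i j, w k :=
    Finset.sum_congr rfl (fun k hk => (htight k (hsub k hk)).symm)
  have e2 : ∑ k ∈ Finset.Ioo i j, w k ≤ ∑ k ∈ Finset.Ioo i j, guardsOn C' (B k) :=
    Finset.sum_le_sum (fun k hk => hw C' hC' k (hpos k (hsub k hk)))
  omega

lemma Deco.lb {G : SimpleGraph V} {S : Set V} {x : V} {n : ℕ} {c : Fin (n + 1) → V}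
    {B : Fin (n + 1) → Set V} (D : Deco G S x n c B) (P : Piece G S x)
    {k : ℕ} {F : Set (Multiset V)} (hF : IsDefense G k F) (a : Fin (n + 1) → ℕ)
    (rep : Fin (n + 1) → Bool) (h0 : rep 0 = true) (ha0 : ∀ C ∈ F, a 0 ≤ guardsOn C (B 0 \ {c 0}))
    (har : ∀ C ∈ F, ∀ i, rep i = true → i ≠ 0 → a i + 1 ≤ guardsOn C (B i))
    (han : ∀ i, rep i = false → a i = 0) :
    ∀ C ∈ F, ∑ i, a i + (Finset.univ.filter (fun i => rep i = true)).card +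
      (Finset.univ.filter (fun i => rep i = false)).card / 2 ≤ guardsOn C (S \ {x}) + 1 := by
  intro C hC
  have hS : guardsOn C (B 0 \ {c 0}) + ∑ i ∈ Finset.univ.erase (0 : Fin (n + 1)), guardsOn C (B i) ≤
      guardsOn C (S \ {x}) := by
    rw [← guardsOn_biUnion _ _ _ D.disj, ← guardsOn_union]
    · apply guardsOn_mono
      rintro v (⟨h1, h2⟩ | ⟨i, hi, hv⟩)
      · rw [D.c0] at h2; exact ⟨D.sub 0 h1, h2⟩
      · refine ⟨D.sub i hv, ?_⟩
        rintro rfl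
        have := D.disj i 0 _ hv (D.c0 ▸ D.mem 0)
        simp [this] at hi
    · rintro v ⟨h1, h2⟩ ⟨i, hi, hv⟩
      have := D.disj i 0 _ hv h1
      simp [this] at hi
  let w : Fin (n + 1) → ℕ := fun i => if rep i then a i + 1 else 0
  have hw : ∀ C ∈ F, ∀ i, i ≠ 0 → w i ≤ guardsOn C (B i) := by
    intro C hC i hi
    simp only [w]
    split_ifs with h
    · exact har C hC i h hi
    · exact Nat.zero_le _
  let s : Fin (n + 1) → ℕ := fun i => guardsOn C (B i)
  -- transfer to natural number indices
  have tr : ∀ (f : Fin (n + 1) → ℕ), ∑ i ∈ Finset.univ.erase (0 : Fin (n + 1)), f i =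
      ∑ k ∈ Finset.Ico 1 (n + 1), (fun k => if h : k < n + 1 then f ⟨k, h⟩ else 0) k := by
    intro f
    symm
    refine Finset.sum_bij' (fun k hk => (⟨k, (Finset.mem_Ico.1 hk).2⟩ : Fin (n + 1)))
      (fun i _ => (i : ℕ)) ?_ ?_ ?_ ?_ ?_
    · intro k hk
      have := Finset.mem_Ico.1 hk
      simp [Fin.ext_iff]; omega
    · intro i hi
      have hi : (i : ℕ) ≠ 0 := fun h => (Finset.mem_erase.1 hi).1 (Fin.ext h)
      have := i.2
      rw [Finset.mem_Ico]; omega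
    · simp
    · simp
    · intro k hk
      simp [(Finset.mem_Ico.1 hk).2]
  have trI : ∀ (f : Fin (n + 1) → ℕ) (i j : Fin (n + 1)), ∑ k ∈ Finset.Icc i j, f k =
      ∑ k ∈ Finset.Ico (i : ℕ) (j + 1), (fun k => if h : k < n + 1 then f ⟨k, h⟩ else 0) k := by
    intro f i j
    symm
    have hj := j.2
    refine Finset.sum_bij' (fun k hk => (⟨k, by have := (Finset.mem_Ico.1 hk).2; omega⟩ : Fin (n + 1)))
      (fun i _ => (i : ℕ)) ?_ ?_ ?_ ?_ ?_
    · intro k hk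
      have := Finset.mem_Ico.1 hk
      rw [Finset.mem_Icc, Fin.le_def, Fin.le_def]
      simp; omega
    · intro k hk
      rw [Finset.mem_Icc, Fin.le_def, Fin.le_def] at hk
      rw [Finset.mem_Ico]; omega
    · simp
    · simp
    · intro k hk
      have : k < n + 1 := by have := (Finset.mem_Ico.1 hk).2; omega
      simp [this]
  have main := pair_sum n (fun k => if h : k < n + 1 then !rep ⟨k, h⟩ else false)
    (fun k => if h : k < n + 1 then (if k = 0 then 0 else w ⟨k, h⟩) else 0)
    (fun k => if h : k < n + 1 then s ⟨k, h⟩ else 0) (by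
      intro k
      by_cases h : k < n + 1
      · by_cases hk : k = 0
        · simp [hk]
        · simp only [h, hk, dif_pos, if_false]
          exact hw C hC _ (by simpa [Fin.ext_iff] using hk)
      · simp [h]) (by
      intro i j h1 h2 h3 hi hj
      have hi' : i < n + 1 := by omega
      have hj' : j < n + 1 := by omega
      simp only [hi', hj', dif_pos, Bool.not_eq_true'] at hi hj
      have := D.pair P hF w hw ⟨i, hi'⟩ ⟨j, hj'⟩ (by simp [Fin.ext_iff]; omega) h2
        (by simp [w, hi]) (by simp [w, hj]) hC
      rw [trI, trI] at this
      refine le_trans (le_of_eq ?_) this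
      congr 1
      apply Finset.sum_congr rfl
      intro k hk
      have : k ≠ 0 := by have := Finset.mem_Ico.1 hk; omega
      simp [this])
  have e1 : ∑ k ∈ Finset.Ico 1 (n + 1), (fun k => if h : k < n + 1 then (if k = 0 then 0 else w ⟨k, h⟩) else 0) k
      = ∑ i ∈ Finset.univ.erase (0 : Fin (n + 1)), w i := by
    rw [tr]
    apply Finset.sum_congr rfl
    intro k hk
    have : k ≠ 0 := by have := Finset.mem_Ico.1 hk; omega
    simp [this]
  have e2 : ∑ k ∈ Finset.Ico 1 (n + 1), ((fun k => if h : k < n + 1 then !rep ⟨k, h⟩ else false) k).toNat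
      = ∑ i ∈ Finset.univ.erase (0 : Fin (n + 1)), (!rep i).toNat := by
    rw [tr]
    apply Finset.sum_congr rfl
    intro k hk
    simp only []
    split_ifs <;> rfl
  have e3 := tr s
  have cn : (Finset.univ.filter (fun i => rep i = false)).card =
      ∑ i ∈ Finset.univ.erase (0 : Fin (n + 1)), (!rep i).toNat := by
    rw [Finset.card_filter, ← Finset.add_sum_erase _ _ (Finset.mem_univ (0 : Fin (n + 1)))]
    simp only [h0]
    simp only [Bool.true_eq_false, if_false, zero_add]
    apply Finset.sum_congr rfl
    intro i _
    cases rep i <;> rfl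
  have ca : ∑ i, a i + (Finset.univ.filter (fun i => rep i = true)).card =
      a 0 + 1 + ∑ i ∈ Finset.univ.erase (0 : Fin (n + 1)), w i := by
    rw [Finset.card_filter, ← Finset.sum_add_distrib,
      ← Finset.add_sum_erase _ _ (Finset.mem_univ (0 : Fin (n + 1)))]
    simp only [h0, if_true]
    congr 1
    apply Finset.sum_congr rfl
    intro i _
    simp only [w]
    cases hr : rep i
    · simp [han i hr]
    · simp
  rw [e1, e2, ← e3] at main
  rw [ca, cn]
  have := ha0 C hC
  simp only [s] at main
  omega

open Classical in
/-- Guard movement in matrix form. -/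
def Mv [Fintype V] (H : SimpleGraph V) (C C' : V → ℕ) (m : V → V → ℕ) : Prop :=
  (∀ u, ∑ v, m u v = C u) ∧ (∀ v, ∑ u, m u v = C' v) ∧ ∀ u v, m u v ≠ 0 → u = v ∨ H.Adj u v

/-- A family of configurations defending `H`, always keeping a guard at `x`, and with the ability
to bring a second guard to `x`. -/
structure Fam [Fintype V] (H : SimpleGraph V) (S : Set V) (x : V) (s : ℕ) (𝓕 : Set (V → ℕ)) :
    Prop where
  ne : 𝓕.Nonempty
  sum : ∀ C ∈ 𝓕, ∑ v, C v = s
  pos : ∀ C ∈ 𝓕, 1 ≤ C x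
  off : ∀ C ∈ 𝓕, ∀ v, v ∉ S → C v = 0
  cover : ∀ C ∈ 𝓕, ∀ u v, H.Adj u v → 1 ≤ C u ∨ 1 ≤ C v
  d1 : ∀ C ∈ 𝓕, ∀ u v, H.Adj u v → ∃ C' ∈ 𝓕, ∃ m, Mv H C C' m ∧ (m u v ≠ 0 ∨ m v u ≠ 0) ∧
    C x ≤ m x x + 1
  d2 : ∀ C ∈ 𝓕, ∃ C' ∈ 𝓕, ∃ m, Mv H C C' m ∧ 2 ≤ C' x ∧ C x ≤ m x x

open Classical in
/-- Adjust a function at one point: add `q`, subtract `k`. -/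
noncomputable def adj1 (f : V → ℕ) (c : V) (q k : ℕ) (v : V) : ℕ :=
  f v + (if v = c then q else 0) - (if v = c then k else 0)

open Classical in
lemma adj1_eq {f : V → ℕ} {c : V} {q k : ℕ} (h : k ≤ f c + q) (v : V) :
    adj1 f c q k v + (if v = c then k else 0) = f v + (if v = c then q else 0) := by
  unfold adj1
  by_cases hv : v = c
  · subst hv; simp; omega
  · simp [hv]

lemma adj1_self (f : V → ℕ) (c : V) (q k : ℕ) : adj1 f c q k c = f c + q - k := by simp [adj1]

lemma adj1_ne (f : V → ℕ) {c v : V} (q k : ℕ) (h : v ≠ c) : adj1 f c q k v = f v := by simp [adj1, h]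

lemma adj1_sum [Fintype V] {f : V → ℕ} {c : V} {q k : ℕ} (h : k ≤ f c + q) :
    ∑ v, adj1 f c q k v + k = ∑ v, f v + q := by
  classical
  have := Finset.sum_congr (rfl : (Finset.univ : Finset V) = _) (fun v _ => adj1_eq h v)
  simpa [Finset.sum_add_distrib] using this

open Classical in
/-- Adjusted movement matrix. -/
noncomputable def adj2 (m : V → V → ℕ) (c : V) (q k : ℕ) (u v : V) : ℕ :=
  if u = c then adj1 (m u) c q k v else m u v

open Classical in
lemma adj2_row [Fintype V] {m : V → V → ℕ} {c : V} {q k : ℕ} (h : k ≤ m c c + q) (u : V) :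
    ∑ v, adj2 m c q k u v + (if u = c then k else 0) = ∑ v, m u v + (if u = c then q else 0) := by
  unfold adj2
  by_cases hu : u = c
  · subst hu; simpa using adj1_sum h
  · simp [hu]

open Classical in
lemma adj2_col [Fintype V] {m : V → V → ℕ} {c : V} {q k : ℕ} (h : k ≤ m c c + q) (v : V) :
    ∑ u, adj2 m c q k u v + (if v = c then k else 0) = ∑ u, m u v + (if v = c then q else 0) := by
  by_cases hv : v = c
  · subst hv
    have : ∀ u, adj2 m v q k u v = adj1 (fun u => m u v) v q k u := by
      intro u
      by_cases hu : u = v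
      · subst hu; simp [adj2, adj1]
      · simp [adj2, adj1, hu]
    simp only [this, if_true]
    exact adj1_sum (f := fun u => m u v) h
  · have : ∀ u, adj2 m c q k u v = m u v := by
      intro u
      by_cases hu : u = c
      · subst hu; simp [adj2, adj1, hv]
      · simp [adj2, hu]
    simp [this, hv]

lemma adj2_ne {m : V → V → ℕ} {c : V} {q k : ℕ} {u v : V} (h : ¬ (u = c ∧ v = c)) :
    adj2 m c q k u v = m u v := by
  by_cases hu : u = c
  · have hv : v ≠ c := fun hv => h ⟨hu, hv⟩
    simp [adj2, hu, adj1_ne _ _ _ hv]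
  · simp [adj2, hu]

lemma adj2_self (m : V → V → ℕ) (c : V) (q k : ℕ) : adj2 m c q k c c = m c c + q - k := by
  simp [adj2, adj1]

/-- Combined configuration. -/
noncomputable def comb {n : ℕ} (c : Fin (n + 1) → V) (q : Fin (n + 1) → ℕ)
    (C : Fin (n + 1) → V → ℕ) (v : V) : ℕ :=
  ∑ i, adj1 (C i) (c i) (q i) 2 v

open Classical in
/-- Combined movement. -/
noncomputable def combM {n : ℕ} (c : Fin (n + 1) → V) (q r l : Fin (n + 1) → ℕ)
    (m : Fin (n + 1) → V → V → ℕ) (u v : V) : ℕ :=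
  ∑ i, adj2 (m i) (c i) (q i) (2 + (r i + l (i - 1))) u v +
    (∑ i, (if u = c i ∧ v = c (i + 1) then r i else 0) +
     ∑ i, (if u = c (i + 1) ∧ v = c i then l i else 0))

lemma shift_sum {n : ℕ} (f : Fin (n + 1) → ℕ) : ∑ i, f (i - 1) = ∑ i, f i :=
  Equiv.sum_comp (Equiv.subRight (1 : Fin (n + 1))) f

open Classical in
lemma combM_row [Fintype V] {n : ℕ} {c : Fin (n + 1) → V} {q r l : Fin (n + 1) → ℕ}
    {m : Fin (n + 1) → V → V → ℕ} {C : Fin (n + 1) → V → ℕ}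
    (hC : ∀ i, 2 ≤ C i (c i) + q i)
    (hm : ∀ i, 2 + (r i + l (i - 1)) ≤ m i (c i) (c i) + q i) (hr : ∀ i u, ∑ v, m i u v = C i u) (u : V) :
    ∑ v, combM c q r l m u v = comb c q C u := by
  unfold combM comb
  simp only [Finset.sum_add_distrib]
  rw [Finset.sum_comm, Finset.sum_comm (f := fun v i => if u = c i ∧ v = c (i + 1) then r i else 0),
    Finset.sum_comm (f := fun v i => if u = c (i + 1) ∧ v = c i then l i else 0)]
  have e1 : ∀ i, ∑ v, (if u = c i ∧ v = c (i + 1) then r i else 0) = if u = c i then r i else 0 := by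
    intro i; by_cases h : u = c i <;> simp [h]
  have e2 : ∀ i, ∑ v, (if u = c (i + 1) ∧ v = c i then l i else 0) =
      if u = c (i + 1) then l i else 0 := by
    intro i; by_cases h : u = c (i + 1) <;> simp [h]
  simp only [e1, e2]
  have e3 := shift_sum (fun i => if u = c (i + 1) then l i else 0)
  simp only [sub_add_cancel] at e3
  rw [← e3]
  have h1 := Finset.sum_congr (rfl : (Finset.univ : Finset (Fin (n + 1))) = _)
    (fun i _ => adj2_row (hm i) u)
  have h2 := Finset.sum_congr (rfl : (Finset.univ : Finset (Fin (n + 1))) = _)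
    (fun i _ => adj1_eq (hC i) u)
  simp only [hr] at h1
  have e4 : ∀ i, (if u = c i then 2 + (r i + l (i - 1)) else 0) = (if u = c i then 2 else 0) +
     ((if u = c i then r i else 0) + (if u = c i then l (i - 1) else 0)) := by
    intro i; split_ifs <;> simp
  simp only [e4, Finset.sum_add_distrib] at h1 h2
  omega

open Classical in
lemma combM_col [Fintype V] {n : ℕ} {c : Fin (n + 1) → V} {q q' r l : Fin (n + 1) → ℕ}
    {m : Fin (n + 1) → V → V → ℕ} {C' : Fin (n + 1) → V → ℕ} (L : Leg q q' r l)
    (hC : ∀ i, 2 ≤ C' i (c i) + q' i)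
    (hm : ∀ i, 2 + (r i + l (i - 1)) ≤ m i (c i) (c i) + q i) (hr : ∀ i v, ∑ u, m i u v = C' i v) (v : V) :
    ∑ u, combM c q r l m u v = comb c q' C' v := by
  unfold combM comb
  simp only [Finset.sum_add_distrib]
  rw [Finset.sum_comm, Finset.sum_comm (f := fun u i => if u = c i ∧ v = c (i + 1) then r i else 0),
    Finset.sum_comm (f := fun u i => if u = c (i + 1) ∧ v = c i then l i else 0)]
  have e1 : ∀ i, ∑ u, (if u = c i ∧ v = c (i + 1) then r i else 0) =
      if v = c (i + 1) then r i else 0 := by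
    intro i; by_cases h : v = c (i + 1) <;> simp [h]
  have e2 : ∀ i, ∑ u, (if u = c (i + 1) ∧ v = c i then l i else 0) =
      if v = c i then l i else 0 := by
    intro i; by_cases h : v = c i <;> simp [h]
  simp only [e1, e2]
  have e3 := shift_sum (fun i => if v = c (i + 1) then r i else 0)
  simp only [sub_add_cancel] at e3
  rw [← e3]
  have h1 := Finset.sum_congr (rfl : (Finset.univ : Finset (Fin (n + 1))) = _)
    (fun i _ => adj2_col (hm i) v)
  have h2 := Finset.sum_congr (rfl : (Finset.univ : Finset (Fin (n + 1))) = _)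
    (fun i _ => adj1_eq (hC i) v)
  simp only [hr] at h1
  have e4 : ∀ i, (if v = c i then 2 + (r i + l (i - 1)) else 0) = (if v = c i then 2 else 0) +
     (if v = c i then r i + l (i - 1) else 0) := by
    intro i; split_ifs <;> simp
  have h3 := Finset.sum_congr (rfl : (Finset.univ : Finset (Fin (n + 1))) = _)
    (fun i _ => show (if v = c i then q' i else 0) + (if v = c i then r i + l (i - 1) else 0) =
      (if v = c i then q i else 0) + ((if v = c i then r (i - 1) else 0) + (if v = c i then l i else 0)) by
      have := L.bal i
      split_ifs <;> omega)
  simp only [e4, Finset.sum_add_distrib] at h1 h2 h3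
  omega

lemma le_combM {n : ℕ} (c : Fin (n + 1) → V) (q r l : Fin (n + 1) → ℕ)
    (m : Fin (n + 1) → V → V → ℕ) (u v : V) (i : Fin (n + 1)) :
    adj2 (m i) (c i) (q i) (2 + (r i + l (i - 1))) u v ≤ combM c q r l m u v := by
  unfold combM
  exact le_trans (Finset.single_le_sum (f := fun i => adj2 (m i) (c i) (q i) (2 + (r i + l (i - 1))) u v)
    (fun _ _ => Nat.zero_le _) (Finset.mem_univ i)) (Nat.le_add_right _ _)

lemma r_le_combM {n : ℕ} (c : Fin (n + 1) → V) (q r l : Fin (n + 1) → ℕ)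
    (m : Fin (n + 1) → V → V → ℕ) (i : Fin (n + 1)) :
    r i ≤ combM c q r l m (c i) (c (i + 1)) := by
  classical
  unfold combM
  have := Finset.single_le_sum (f := fun j => if c i = c j ∧ c (i + 1) = c (j + 1) then r j else 0)
    (fun _ _ => Nat.zero_le _) (Finset.mem_univ i)
  simp only [and_self, if_true] at this
  exact le_trans this (le_trans (Nat.le_add_right _ _) (Nat.le_add_left _ _))

lemma l_le_combM {n : ℕ} (c : Fin (n + 1) → V) (q r l : Fin (n + 1) → ℕ)
    (m : Fin (n + 1) → V → V → ℕ) (i : Fin (n + 1)) :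
    l i ≤ combM c q r l m (c (i + 1)) (c i) := by
  classical
  unfold combM
  have := Finset.single_le_sum (f := fun j => if c (i + 1) = c (j + 1) ∧ c i = c j then l j else 0)
    (fun _ _ => Nat.zero_le _) (Finset.mem_univ i)
  simp only [and_self, if_true] at this
  exact le_trans this (le_trans (Nat.le_add_left _ _) (Nat.le_add_left _ _))

lemma res_mono {G : SimpleGraph V} {S T : Set V} (h : S ⊆ T) {u v : V} (huv : (res G S).Adj u v) :
    (res G T).Adj u v := ⟨huv.1, h huv.2.1, h huv.2.2⟩

lemma combM_adj {G : SimpleGraph V} {S : Set V} {x : V} {n : ℕ} {c : Fin (n + 1) → V}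
    {B : Fin (n + 1) → Set V} (D : Deco G S x n c B) (q r l : Fin (n + 1) → ℕ)
    (m : Fin (n + 1) → V → V → ℕ)
    (hm : ∀ i u v, m i u v ≠ 0 → u = v ∨ (res G (B i)).Adj u v) (u v : V)
    (h : combM c q r l m u v ≠ 0) : u = v ∨ (res G S).Adj u v := by
  classical
  have hadj : ∀ i, (res G S).Adj (c i) (c (i + 1)) := fun i =>
    ⟨D.adj i, D.sub i (D.mem i), D.sub (i + 1) (D.mem (i + 1))⟩
  by_contra hcon
  apply h
  unfold combM
  have h1 : ∑ i, adj2 (m i) (c i) (q i) (2 + (r i + l (i - 1))) u v = 0 := by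
    apply Finset.sum_eq_zero
    intro i _
    rw [adj2_ne]
    · by_contra h; 
      rcases hm i u v h with h | h
      · exact hcon (Or.inl h)
      · exact hcon (Or.inr (res_mono (D.sub i) h))
    · rintro ⟨h1, h2⟩; exact hcon (Or.inl (h1.trans h2.symm))
  have h2 : ∑ i, (if u = c i ∧ v = c (i + 1) then r i else 0) = 0 := by
    apply Finset.sum_eq_zero
    intro i _
    rw [if_neg]
    rintro ⟨rfl, rfl⟩; exact hcon (Or.inr (hadj i))
  have h3 : ∑ i, (if u = c (i + 1) ∧ v = c i then l i else 0) = 0 := by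
    apply Finset.sum_eq_zero
    intro i _
    rw [if_neg]
    rintro ⟨rfl, rfl⟩; exact hcon (Or.inr (hadj i).symm)
  rw [h1, h2, h3]

lemma comb_le {n : ℕ} (c : Fin (n + 1) → V) (q : Fin (n + 1) → ℕ)
    (C : Fin (n + 1) → V → ℕ) (v : V) (i : Fin (n + 1)) :
    adj1 (C i) (c i) (q i) 2 v ≤ comb c q C v :=
  Finset.single_le_sum (f := fun i => adj1 (C i) (c i) (q i) 2 v)
    (fun _ _ => Nat.zero_le _) (Finset.mem_univ i)

/-- Composition of families along a ring. -/
theorem compose [Fintype V] {G : SimpleGraph V} {S : Set V} {x : V} {n : ℕ} {c : Fin (n + 1) → V}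
    {B : Fin (n + 1) → Set V} (D : Deco G S x n c B) (a : Fin (n + 1) → ℕ)
    (rep : Fin (n + 1) → Bool) (h0 : rep 0 = true) (han : ∀ i, rep i = false → a i = 0)
    (hBn : ∀ i, rep i = false → B i = {c i})
    (𝓕 : Fin (n + 1) → Set (V → ℕ)) (hF : ∀ i, Fam (res G (B i)) (B i) (c i) (a i + 2) (𝓕 i)) :
    ∃ 𝓖, Fam (res G S) S x (∑ i, a i + (Finset.univ.filter (fun i => rep i = true)).card +
      (Finset.univ.filter (fun i => rep i = false)).card / 2 + 1) 𝓖 := by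
  classical
  obtain ⟨Q, Qne, Qsum, Qrep, Qcov, Qt1, Qt2⟩ := ring_dynamics rep h0
  -- nonrep configurations
  have hnon : ∀ i, rep i = false → ∀ C ∈ 𝓕 i, C (c i) = 2 := by
    intro i hi C hC
    have h1 := (hF i).sum C hC
    rw [han i hi, Finset.sum_eq_single (c i)] at h1
    · exact h1
    · intro v _ hv
      apply (hF i).off C hC
      rw [hBn i hi]; exact hv
    · simp
  let St : (Fin (n + 1) → ℕ) → (Fin (n + 1) → V → ℕ) → Prop := fun q C =>
    q ∈ Q ∧ (∀ i, C i ∈ 𝓕 i) ∧ ∀ i, rep i = true → q i = 1 → 2 ≤ C i (c i)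
  have hge : ∀ q C, St q C → ∀ i, 2 ≤ C i (c i) + q i ∧ (rep i = true → 3 ≤ C i (c i) + q i) := by
    rintro q C ⟨h1, h2, h3⟩ i
    cases hr : rep i with
    | false => have := hnon i hr _ (h2 i); exact ⟨by omega, by simp⟩
    | true =>
      have := (hF i).pos _ (h2 i)
      rcases Qrep q h1 i hr with h | h
      · have := h3 i hr h; exact ⟨by omega, fun _ => by omega⟩
      · exact ⟨by omega, fun _ => by omega⟩
  have hx : ∀ q C, St q C → comb c q C x = C 0 x + q 0 - 2 := by
    rintro q C ⟨h1, h2, h3⟩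
    unfold comb
    rw [Finset.sum_eq_single 0]
    · rw [← D.c0, adj1_self]
    · intro i _ hi
      have hxi : x ∉ B i := fun h => hi (D.disj i 0 x h (D.c0 ▸ D.mem 0))
      rw [adj1_ne]
      · exact (hF i).off _ (h2 i) _ hxi
      · rintro rfl; exact hxi (D.mem i)
    · simp
  -- step lemma
  have step : ∀ q C, St q C → ∀ q' ∈ Q, ∀ r l, Leg q q' r l → ∀ C' m,
      (∀ i, C' i ∈ 𝓕 i) → (∀ i, Mv (res G (B i)) (C i) (C' i) (m i)) →
      (∀ i, (2 ≤ C' i (c i) ∧ C i (c i) ≤ m i (c i) (c i)) ∨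
        (rep i = true ∧ r i + l (i - 1) = 0 ∧ q' i = 2 ∧ C i (c i) ≤ m i (c i) (c i) + 1)) →
      St q' C' ∧ Mv (res G S) (comb c q C) (comb c q' C') (combM c q r l m) ∧
      comb c q C x ≤ combM c q r l m x x + 1 ∧
      (r 0 + l (0 - 1) = 0 → C 0 x ≤ m 0 x x → comb c q C x ≤ combM c q r l m x x) := by
    intro q C hS q' hq' r l L C' m hC' hM hcase
    have hS' : St q' C' := by
      refine ⟨hq', hC', fun i hr hi => ?_⟩
      rcases hcase i with h | h
      · exact h.1
      · omega
    have hm : ∀ i, 2 + (r i + l (i - 1)) ≤ m i (c i) (c i) + q i := by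
      intro i
      have hg := hge q C hS i
      have := L.le i
      have := L.le1 i
      rcases hcase i with h | h
      · cases hr : rep i with
        | false => have := hnon i hr _ (hS.2.1 i); omega
        | true => have := hg.2 hr; omega
      · have := hg.2 h.1; omega
    refine ⟨hS', ⟨combM_row (fun i => (hge q C hS i).1) hm (fun i => (hM i).1),
      combM_col L (fun i => (hge q' C' hS' i).1) hm (fun i => (hM i).2.1),
      combM_adj D q r l m (fun i => (hM i).2.2)⟩, ?_, ?_⟩
    · rw [hx q C hS]
      have h1 := le_combM c q r l m x x 0
      have h2 := hcase 0
      have h3 := L.le1 0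
      rw [D.c0] at h1 h2
      rw [adj2_self] at h1
      omega
    · intro ho hc
      rw [hx q C hS]
      have h1 := le_combM c q r l m x x 0
      rw [D.c0] at h1
      rw [adj2_self] at h1
      omega
  have stepD2 : ∀ q C, St q C → ∀ q' ∈ Q, ∀ r l, Leg q q' r l → ∃ C' m, St q' C' ∧
      Mv (res G S) (comb c q C) (comb c q' C') (combM c q r l m) ∧
      comb c q C x ≤ combM c q r l m x x + 1 ∧
      (r 0 + l (0 - 1) = 0 → comb c q C x ≤ combM c q r l m x x) ∧ 2 ≤ C' 0 x := by
    intro q C hS q' hq' r l L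
    choose C' h1 m h2 h3 h4 using fun i => (hF i).d2 (C i) (hS.2.1 i)
    obtain ⟨s1, s2, s3, s4⟩ := step q C hS q' hq' r l L C' m h1 h2 (fun i => Or.inl ⟨h3 i, h4 i⟩)
    refine ⟨C', m, s1, s2, s3, fun h => s4 h ?_, ?_⟩
    · have := h4 0; rwa [D.c0] at this
    · have := h3 0; rwa [D.c0] at this
  have static : ∀ q : Fin (n + 1) → ℕ, Leg q q (fun _ => 0) (fun _ => 0) := fun q =>
    ⟨fun i => by simp, fun i => by simp, fun i => by simp⟩
  -- ring moves keeping position `b` quiet and ending with `2` there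
  have quiet : ∀ q ∈ Q, ∀ b, rep b = true → ∃ q' ∈ Q, ∃ r l, Leg q q' r l ∧ q' b = 2 ∧
      r b + l (b - 1) = 0 := by
    intro q hq b hb
    rcases Qrep q hq b hb with h | h
    · exact Qt2 q hq b hb h
    · exact ⟨q, hq, _, _, static q, h, by simp⟩
  refine ⟨{E | ∃ q C, St q C ∧ E = comb c q C}, ?_, ?_, ?_, ?_, ?_, ?_, ?_⟩
  · obtain ⟨q, hq⟩ := Qne
    have : ∀ i, ∃ C ∈ 𝓕 i, 2 ≤ C (c i) := by
      intro i
      obtain ⟨C, hC⟩ := (hF i).ne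
      obtain ⟨C', h1, _, _, h2, _⟩ := (hF i).d2 C hC
      exact ⟨C', h1, h2⟩
    choose C h1 h2 using this
    exact ⟨_, q, C, ⟨hq, h1, fun i _ _ => h2 i⟩, rfl⟩
  · rintro _ ⟨q, C, hS, rfl⟩
    unfold comb
    rw [Finset.sum_comm]
    have h1 := Finset.sum_congr (rfl : (Finset.univ : Finset (Fin (n + 1))) = _)
      (fun i _ => adj1_sum (hge q C hS i).1)
    have h2 := Finset.sum_congr (rfl : (Finset.univ : Finset (Fin (n + 1))) = _)
      (fun i _ => (hF i).sum _ (hS.2.1 i))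
    have h3 := Qsum q hS.1
    simp only [Finset.sum_add_distrib] at h1 h2
    omega
  · rintro _ ⟨q, C, hS, rfl⟩
    rw [hx q C hS]
    have := (hge q C hS 0).2 h0
    rw [D.c0] at this
    omega
  · rintro _ ⟨q, C, hS, rfl⟩ v hv
    unfold comb
    apply Finset.sum_eq_zero
    intro i _
    have hvi : v ∉ B i := fun h => hv (D.sub i h)
    rw [adj1_ne]
    · exact (hF i).off _ (hS.2.1 i) _ hvi
    · rintro rfl; exact hvi (D.mem i)
  · rintro _ ⟨q, C, hS, rfl⟩ u v ⟨huv, hu, hv⟩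
    obtain ⟨i, hi⟩ := D.cov u hu
    obtain ⟨j, hj⟩ := D.cov v hv
    have hring : ∀ i, 1 ≤ q i → 1 ≤ comb c q C (c i) := by
      intro i hq
      have h1 := comb_le c q C (c i) i
      rw [adj1_self] at h1
      have h2 := hge q C hS i
      cases hr : rep i with
      | false => have := hnon i hr _ (hS.2.1 i); omega
      | true => have := h2.2 hr; omega
    rcases D.cross i j u v hi hj huv with h | ⟨rfl, rfl, h⟩
    · subst h
      have hr : rep i = true := by
        by_contra hr
        rw [hBn i (by simpa using hr)] at hi hj
        exact huv.ne (hi.trans hj.symm)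
      have key : ∀ w ∈ B i, 1 ≤ C i w → 1 ≤ comb c q C w := by
        intro w hw h1
        by_cases hwc : w = c i
        · subst hwc
          apply hring
          rcases Qrep q hS.1 i hr with h | h <;> omega
        · have h2 := comb_le c q C w i
          rw [adj1_ne _ _ _ hwc] at h2
          omega
      rcases (hF i).cover _ (hS.2.1 i) u v ⟨huv, hi, hj⟩ with h | h
      · exact Or.inl (key u hi h)
      · exact Or.inr (key v hj h)
    · rcases h with h | h
      · subst h
        exact (Qcov q hS.1 i).imp (hring _) (hring _)
      · subst h
        exact ((Qcov q hS.1 j).imp (hring _) (hring _)).symm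
  · rintro _ ⟨q, C, hS, rfl⟩ u v ⟨huv, hu, hv⟩
    obtain ⟨i, hi⟩ := D.cov u hu
    obtain ⟨j, hj⟩ := D.cov v hv
    have ring : ∀ i, ∃ C' ∈ {E | ∃ q C, St q C ∧ E = comb c q C}, ∃ m,
        Mv (res G S) (comb c q C) C' m ∧ (m (c i) (c (i + 1)) ≠ 0 ∨ m (c (i + 1)) (c i) ≠ 0) ∧
        comb c q C x ≤ m x x + 1 := by
      intro i
      obtain ⟨q', hq', r, l, L, hrl⟩ := Qt1 q hS.1 i
      obtain ⟨C', m, s1, s2, s3, _⟩ := stepD2 q C hS q' hq' r l L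
      refine ⟨_, ⟨q', C', s1, rfl⟩, _, s2, ?_, s3⟩
      have h1 := r_le_combM c q r l m i
      have h2 := l_le_combM c q r l m i
      omega
    rcases D.cross i j u v hi hj huv with h | ⟨rfl, rfl, h⟩
    · subst h
      have hr : rep i = true := by
        by_contra hr
        rw [hBn i (by simpa using hr)] at hi hj
        exact huv.ne (hi.trans hj.symm)
      obtain ⟨q', hq', r, l, L, hq2, ho⟩ := quiet q hS.1 i hr
      obtain ⟨Ci, hCi, mi, hmi, hat, hle⟩ := (hF i).d1 _ (hS.2.1 i) u v ⟨huv, hi, hj⟩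
      choose C' h1 m h2 h3 h4 using fun i => (hF i).d2 (C i) (hS.2.1 i)
      obtain ⟨s1, s2, s3, _⟩ := step q C hS q' hq' r l L (Function.update C' i Ci)
        (Function.update m i mi)
        (by
          intro k
          by_cases hk : k = i
          · subst hk; simpa using hCi
          · simpa [hk] using h1 k)
        (by
          intro k
          by_cases hk : k = i
          · subst hk; simpa using hmi
          · simpa [hk] using h2 k)
        (by
          intro k
          by_cases hk : k = i
          · subst hk; right; simpa using ⟨hr, by simpa using ho, hq2, hle⟩
          · left; simpa [hk] using ⟨h3 k, h4 k⟩)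
      refine ⟨_, ⟨q', _, s1, rfl⟩, _, s2, ?_, s3⟩
      have g1 := le_combM c q r l (Function.update m i mi) u v i
      have g2 := le_combM c q r l (Function.update m i mi) v u i
      rw [adj2_ne (by rintro ⟨e1, e2⟩; exact huv.ne (e1.trans e2.symm))] at g1
      rw [adj2_ne (by rintro ⟨e1, e2⟩; exact huv.ne (e2.trans e1.symm))] at g2
      rw [Function.update_self] at g1 g2
      omega
    · rcases h with h | h
      · subst h; exact ring i
      · subst h
        obtain ⟨E, hE, m, k1, k2, k3⟩ := ring j
        exact ⟨E, hE, m, k1, k2.symm, k3⟩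
  · rintro _ ⟨q, C, hS, rfl⟩
    obtain ⟨q', hq', r, l, L, hq2, ho⟩ := quiet q hS.1 0 h0
    obtain ⟨C', m, s1, s2, s3, s4, s5⟩ := stepD2 q C hS q' hq' r l L
    refine ⟨_, ⟨q', C', s1, rfl⟩, _, s2, ?_, s4 ho⟩
    rw [hx q' C' s1]; omega

/-- The cycle condition of a cactus. -/
def Cac (H : SimpleGraph V) : Prop :=
  ∀ (a b : V) (c₁ : H.Walk a a) (c₂ : H.Walk b b), c₁.IsCycle → c₂.IsCycle →
    {e | e ∈ c₁.edges} ≠ {e | e ∈ c₂.edges} →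
    {v | v ∈ c₁.support ∧ v ∈ c₂.support}.Subsingleton

lemma Cac.mono {H K : SimpleGraph V} (h : H ≤ K) (hK : Cac K) : Cac H := by
  intro a b c₁ c₂ h1 h2 hne
  have := hK a b (c₁.mapLe h) (c₂.mapLe h) (h1.mapLe h) (h2.mapLe h)
    (by simpa using hne)
  simpa using this

lemma deco_of_ring {G : SimpleGraph V} {S : Set V} {x : V} (P : Piece G S x) {n : ℕ}
    (c : Fin (n + 1) → V) (c0 : c 0 = x) (hadj : ∀ i, (res G S).Adj (c i) (c (i + 1)))
    (sep : ∀ i j, ((res G S).deleteEdges {e | ∃ i, e = s(c i, c (i + 1))}).Reachable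
      (c i) (c j) → i = j) :
    Deco G S x n c (fun i => {v | ((res G S).deleteEdges
      {e | ∃ i, e = s(c i, c (i + 1))}).Reachable (c i) v}) := by
  set K := (res G S).deleteEdges {e | ∃ i, e = s(c i, c (i + 1))} with hK
  have hKle : ∀ u v, K.Adj u v → (res G S).Adj u v := fun u v h => by
    rw [hK, deleteEdges_adj] at h; exact h.1
  have hKor : ∀ u v, (res G S).Adj u v → K.Adj u v ∨
      ∃ i, (u = c i ∧ v = c (i + 1)) ∨ (u = c (i + 1) ∧ v = c i) := fun u v h => by
    by_cases h1 : ∃ i, s(u, v) = s(c i, c (i + 1))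
    · right
      obtain ⟨i, hi⟩ := h1
      refine ⟨i, ?_⟩
      simpa [Sym2.eq_iff] using hi
    · left
      rw [hK, deleteEdges_adj]
      exact ⟨h, h1⟩
  have hsub : ∀ i v, K.Reachable (c i) v → v ∈ S := by
    intro i v h
    rw [reachable_iff_reflTransGen] at h
    induction h with
    | refl => exact (hadj i).2.1
    | tail _ h _ => exact (hKle _ _ h).2.2
  refine ⟨c0, fun i => Reachable.refl _, fun i v h => hsub i v h, ?_, ?_, fun i => (hadj i).1,
    ?_, ?_⟩
  · intro v hv
    have h := P.conn v hv
    rw [reachable_iff_reflTransGen] at h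
    induction h with
    | refl => exact ⟨0, by simp [c0]⟩
    | tail _ h ih =>
      obtain ⟨i, hi⟩ := ih h.2.1
      rcases hKor _ _ h with h1 | ⟨j, ⟨_, rfl⟩ | ⟨_, rfl⟩⟩
      · exact ⟨i, Reachable.trans hi h1.reachable⟩
      · exact ⟨j + 1, Reachable.refl _⟩
      · exact ⟨j, Reachable.refl _⟩
  · intro i j v hi hj
    exact sep i j (Reachable.trans hi (Reachable.symm hj))
  · intro i j u v hi hj hG
    have h : (res G S).Adj u v := ⟨hG, hsub _ _ hi, hsub _ _ hj⟩
    rcases hKor _ _ h with h1 | ⟨k, ⟨rfl, rfl⟩ | ⟨rfl, rfl⟩⟩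
    · left
      exact sep i j ((Reachable.trans hi h1.reachable).trans (Reachable.symm hj))
    · obtain rfl := sep _ _ hi
      obtain rfl := sep _ _ hj
      simp
    · obtain rfl := sep _ _ hi
      obtain rfl := sep _ _ hj
      simp
  · intro i v h
    have h' : K.Reachable (c i) v := h
    rw [reachable_iff_reflTransGen] at h'
    clear h
    induction h' with
    | refl => exact Reachable.refl _
    | tail h1 h2 ih =>
      refine ih.trans (Adj.reachable ?_)
      rw [← reachable_iff_reflTransGen] at h1
      exact ⟨(hKle _ _ h2).1, h1, h1.trans h2.reachable⟩

lemma cycle_edge_ne {H : SimpleGraph V} {x : V} {w : H.Walk x x} (hw : w.IsCycle) {a b : ℕ}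
    (hab : a < b) (hb : b < w.length) :
    s(w.getVert a, w.getVert (a + 1)) ≠ s(w.getVert b, w.getVert (b + 1)) := by
  have h3 := hw.three_le_length
  have hinj := hw.getVert_injOn'
  intro h
  rw [Sym2.eq_iff] at h
  rcases h with ⟨h, _⟩ | ⟨h, h'⟩
  · have := hinj (by simp; omega) (by simp; omega) h
    omega
  · have e := hinj (by simp; omega) (by simp; omega) h'
    subst e
    rcases Nat.lt_or_ge (a + 1 + 1) w.length with h4 | h4
    · have := hinj (by simp; omega) (by simp; omega) h
      omega
    · have h5 : a + 1 + 1 = w.length := by omega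
      rw [h5, w.getVert_length] at h
      have h := h.trans w.getVert_zero.symm
      have := hinj (by simp; omega) (by simp) h
      omega

lemma cycle_sep {H : SimpleGraph V} (hH : Cac H) {x : V} {w : H.Walk x x} (hw : w.IsCycle)
    {i j : ℕ} (hij : i < j) (hj : j < w.length)
    (hr : (H.deleteEdges {e | ∃ k < w.length, e = s(w.getVert k, w.getVert (k + 1))}).Reachable
      (w.getVert i) (w.getVert j)) : False := by
  set g := w.getVert with hg
  obtain ⟨n, hn⟩ : ∃ n, w.length = n + 1 := ⟨w.length - 1, by omega⟩
  set K := H.deleteEdges {s(g n, g (n + 1))} with hK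
  have hadj : ∀ k < w.length, H.Adj (g k) (g (k + 1)) := fun k hk => w.adj_getVert_succ hk
  have hKi : K.Adj (g i) (g (i + 1)) := by
    rw [hK, deleteEdges_adj]
    exact ⟨hadj i (by omega), cycle_edge_ne hw (by omega) (by omega)⟩
  have hmain : (K \ fromEdgeSet {s(g i, g (i + 1))}).Reachable (g i) (g (i + 1)) := by
    have h1 : (K \ fromEdgeSet {s(g i, g (i + 1))}).Reachable (g i) (g j) := by
      refine hr.mono ?_
      intro u v h
      rw [deleteEdges_adj] at h
      refine ⟨?_, ?_⟩
      · rw [hK, deleteEdges_adj]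
        exact ⟨h.1, fun e => h.2 ⟨n, by omega, e⟩⟩
      · rw [fromEdgeSet_adj]
        rintro ⟨e, _⟩
        exact h.2 ⟨i, by omega, e⟩
    have h2 : ∀ k, i + 1 ≤ k → k ≤ j →
        (K \ fromEdgeSet {s(g i, g (i + 1))}).Reachable (g (i + 1)) (g k) := by
      intro k hk
      induction k, hk using Nat.le_induction with
      | base => intro _; exact Reachable.refl _
      | succ k hk ih =>
        intro hkj
        refine (ih (by omega)).trans (Adj.reachable ⟨?_, ?_⟩)
        · rw [hK, deleteEdges_adj]
          exact ⟨hadj k (by omega), cycle_edge_ne hw (by omega) (by omega)⟩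
        · rw [fromEdgeSet_adj]
          rintro ⟨e, _⟩
          exact cycle_edge_ne hw (by omega) (by omega) (Set.mem_singleton_iff.1 e).symm
    exact h1.trans (h2 j (by omega) le_rfl).symm
  obtain ⟨u, p, hp, hpe⟩ := adj_and_reachable_delete_edges_iff_exists_cycle.1 ⟨hKi, hmain⟩
  have hle : K ≤ H := deleteEdges_le _
  have hs := hH _ _ w (p.mapLe hle) hw (hp.mapLe hle) (by
    intro h
    have h1 : s(g n, g (n + 1)) ∈ {e | e ∈ w.edges} := by
      show s(g n, g (n + 1)) ∈ w.edges
      rw [Walk.mk_mem_edges_iff_exists]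
      exact ⟨n, by omega, by simp [hg]⟩
    rw [h] at h1
    simp only [Walk.edges_mapLe_eq_edges, Set.mem_ofPred_eq] at h1
    have := p.edges_subset_edgeSet h1
    rw [mem_edgeSet, hK, deleteEdges_adj] at this
    exact this.2 rfl)
  refine hKi.ne (hs ⟨w.getVert_mem_support _, ?_⟩ ⟨w.getVert_mem_support _, ?_⟩)
  · simpa using p.fst_mem_support_of_mem_edges hpe
  · simpa using p.snd_mem_support_of_mem_edges hpe

lemma exists_deco {G : SimpleGraph V} {S : Set V} {x : V} (P : Piece G S x) (hS : S ≠ {x})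
    (hc : Cac (res G S)) : ∃ (n : ℕ) (c : Fin (n + 1) → V) (B : Fin (n + 1) → Set V),
      Deco G S x n c B := by
  obtain ⟨y, hyS, hxy⟩ := P.exists_nbr hS
  have hH : (res G S).Adj x y := ⟨hxy, P.mem, hyS⟩
  by_cases hr : ((res G S) \ fromEdgeSet {s(x, y)}).Reachable x y
  · obtain ⟨u, p, hp, hpe⟩ := adj_and_reachable_delete_edges_iff_exists_cycle.1 ⟨hH, hr⟩
    classical
    have hx := p.fst_mem_support_of_mem_edges hpe
    set w := p.rotate x hx with hwdef
    have hw : w.IsCycle := hp.rotate hx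
    have h3 := hw.three_le_length
    obtain ⟨n, hn⟩ : ∃ n, w.length = n + 1 := ⟨w.length - 1, by omega⟩
    have hsucc : ∀ i : Fin (n + 1), w.getVert ((i + 1 : Fin (n + 1)) : ℕ) =
        w.getVert (i.val + 1) := by
      intro i
      rw [Fin.val_add_one]
      split_ifs with h
      · subst h
        simp [← hn]
      · rfl
    refine ⟨n, fun i => w.getVert i, _,
      deco_of_ring P (fun i => w.getVert i) (by simp) ?_ ?_⟩
    · intro i
      simp only [hsucc]
      exact w.adj_getVert_succ (by omega)
    · have key : ∀ i j : Fin (n + 1), ((res G S).deleteEdges {e | ∃ i : Fin (n + 1),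
          e = s(w.getVert i, w.getVert ((i + 1 : Fin (n + 1)) : ℕ))}).Reachable
          (w.getVert i) (w.getVert j) → ¬ i < j := by
        intro i j h hij
        refine cycle_sep hc hw (i := i) (j := j) hij (by omega) (h.mono ?_)
        apply deleteEdges_anti
        rintro e ⟨k, hk, rfl⟩
        refine ⟨⟨k, by omega⟩, ?_⟩
        rw [hsucc]
      intro i j h
      rcases lt_trichotomy i j with h1 | h1 | h1
      · exact (key i j h h1).elim
      · exact h1
      · exact (key j i h.symm h1).elim
  · have hset : {e | ∃ i : Fin 2, e = s((![x, y] : Fin 2 → V) i, (![x, y] : Fin 2 → V) (i + 1))}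
        = {s(x, y)} := by
      ext e
      simp [Fin.exists_fin_two, Sym2.eq_swap]
    have hr' : ¬ ((res G S).deleteEdges {s(x, y)}).Reachable x y := hr
    refine ⟨1, ![x, y], _, deco_of_ring P ![x, y] rfl ?_ ?_⟩
    · intro i
      fin_cases i
      · exact hH
      · exact hH.symm
    · rw [hset]
      intro i j h
      fin_cases i <;> fin_cases j
      · rfl
      · exact (hr' h).elim
      · exact (hr' h.symm).elim
      · rfl

lemma Deco.ssub {G : SimpleGraph V} {S : Set V} {x : V} {n : ℕ} {c : Fin (n + 1) → V}
    {B : Fin (n + 1) → Set V} (D : Deco G S x n c B) (i : Fin (n + 1)) :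
    B i ⊂ S := by
  refine ⟨D.sub i, fun h => ?_⟩
  have hne : i ≠ i + 1 := by
    intro h
    have := (D.adj i).ne
    rw [← h] at this
    exact this rfl
  exact hne (D.disj i (i + 1) _ (h (D.sub _ (D.mem (i + 1)))) (D.mem (i + 1)))

lemma base_fam [Fintype V] (G : SimpleGraph V) (x : V) :
    ∃ 𝓕, Fam (res G {x}) {x} x 2 𝓕 := by
  classical
  have hn : ∀ u v, ¬ (res G {x}).Adj u v := by
    rintro u v ⟨h, hu, hv⟩
    rw [Set.mem_singleton_iff] at hu hv
    subst hu; subst hv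
    exact h.ne rfl
  refine ⟨{fun v => if v = x then 2 else 0}, Set.singleton_nonempty _, ?_, ?_, ?_, ?_, ?_, ?_⟩
  · rintro C rfl; simp
  · rintro C rfl; simp
  · rintro C rfl v hv
    have : v ≠ x := hv
    simp [this]
  · intro C _ u v h; exact (hn u v h).elim
  · intro C _ u v h; exact (hn u v h).elim
  · rintro C rfl
    refine ⟨_, rfl, fun u v => if u = x then (if v = x then 2 else 0) else 0, ⟨?_, ?_, ?_⟩, ?_, ?_⟩
    · intro u
      by_cases h : u = x <;> simp [h]
    · intro v; simp
    · intro u v h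
      left
      by_cases h1 : u = x
      · by_cases h2 : v = x
        · rw [h1, h2]
        · simp [h2] at h
      · simp [h1] at h
    · simp
    · simp

theorem main_ind [Fintype V] {G : SimpleGraph V} {k : ℕ} {F : Set (Multiset V)}
    (hF : IsDefense G k F) : ∀ (N : ℕ) (S : Set V) (x : V), S.ncard = N → Piece G S x →
      Cac (res G S) → ∃ a, (∀ C ∈ F, a ≤ guardsOn C (S \ {x})) ∧
        ∃ 𝓕, Fam (res G S) S x (a + 2) 𝓕 := by
  classical
  intro N
  induction N using Nat.strong_induction_on with
  | _ N ih =>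
    intro S x hN P hc
    by_cases hS : S = {x}
    · subst hS
      exact ⟨0, fun _ _ => Nat.zero_le _, base_fam G x⟩
    obtain ⟨n, c, B, D⟩ := exists_deco P hS hc
    have hIH : ∀ i, ∃ a, (∀ C ∈ F, a ≤ guardsOn C (B i \ {c i})) ∧
        ∃ 𝓕, Fam (res G (B i)) (B i) (c i) (a + 2) 𝓕 := by
      intro i
      refine ih _ ?_ (B i) (c i) rfl (D.piece P i) (hc.mono ?_)
      · rw [← hN]
        exact Set.ncard_lt_ncard (D.ssub i) (Set.toFinite _)
      · intro u v h
        exact ⟨h.1, D.sub i h.2.1, D.sub i h.2.2⟩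
    choose a ha 𝓕 h𝓕 using hIH
    set rep : Fin (n + 1) → Bool := fun i => decide (i = 0 ∨ B i ≠ {c i}) with hrep
    have h0 : rep 0 = true := by simp [hrep]
    have hrt : ∀ i, rep i = true → i ≠ 0 → B i ≠ {c i} := by
      intro i h h1
      have := of_decide_eq_true h
      tauto
    have hrf : ∀ i, rep i = false → B i = {c i} := by
      intro i h
      have := of_decide_eq_false h
      tauto
    have han : ∀ i, rep i = false → a i = 0 := by
      intro i h
      obtain ⟨C, hC⟩ := hF.1
      have h1 := ha i C hC
      rw [hrf i h] at h1
      simpa [guardsOn] using h1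
    have hlb := D.lb P hF a rep h0 (ha 0)
      (fun C hC i hi hi0 => total_lb (D.piece P i) (hrt i hi hi0) hF (ha i) C hC) han
    obtain ⟨𝓖, h𝓖⟩ := compose D a rep h0 han hrf 𝓕 h𝓕
    have hpos : 0 < (Finset.univ.filter (fun i => rep i = true)).card :=
      Finset.card_pos.2 ⟨0, by simp [h0]⟩
    refine ⟨∑ i, a i + (Finset.univ.filter (fun i => rep i = true)).card +
      (Finset.univ.filter (fun i => rep i = false)).card / 2 - 1, fun C hC => ?_, 𝓖, ?_⟩
    · have := hlb C hC
      omega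
    · convert h𝓖 using 1
      omega

lemma cac_of_iso {V V' : Type} {G : SimpleGraph V} (hG : Cac G) {G' : SimpleGraph V'} {S : Set V'}
    (φ : G ≃g G'.induce S) : Cac (res G' S) := by
  let f : (res G' S).induce S →g G :=
    ⟨fun v => φ.symm v, fun {u v} h => φ.symm.map_rel_iff.2 (show G'.Adj u v from h.1)⟩
  have hf : Function.Injective f := fun u v h => φ.symm.injective h
  have hι : Function.Injective (Embedding.induce (G := res G' S) S).toHom := Subtype.val_injective
  have key : ∀ a (c : (res G' S).Walk a a), c.IsCycle → ∃ (b : S)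
      (p : ((res G' S).induce S).Walk b b), p.IsCycle ∧
      c.edges = p.edges.map (Sym2.map Subtype.val) ∧ c.support = p.support.map Subtype.val := by
    intro a c hc
    have hsup : ∀ v ∈ c.support, v ∈ S := by
      intro v hv
      rw [Walk.mem_support_iff_exists_mem_edges_of_not_nil hc.not_nil] at hv
      obtain ⟨e, he, hve⟩ := hv
      have := c.edges_subset_edgeSet he
      induction e with
      | _ u w =>
        rw [mem_edgeSet] at this
        rcases Sym2.mem_iff.1 hve with rfl | rfl
        · exact this.2.1
        · exact this.2.2
    have hm := c.map_induce (s := S) hsup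
    refine ⟨_, c.induce S hsup, ?_, ?_, ?_⟩
    · rw [← Walk.isCycle_map_iff_of_injective hι, hm]
      exact hc
    · exact (congrArg (fun w : (res G' S).Walk a a => w.edges) hm).symm.trans
        (Walk.edges_map _ _)
    · exact (congrArg (fun w : (res G' S).Walk a a => w.support) hm).symm.trans
        (Walk.support_map _ _)
  intro a b c₁ c₂ h1 h2 hne
  obtain ⟨a', p₁, hp1, he1, hs1⟩ := key a c₁ h1
  obtain ⟨b', p₂, hp2, he2, hs2⟩ := key b c₂ h2
  have := hG _ _ (p₁.map f) (p₂.map f) (hp1.map hf) (hp2.map hf) (by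
    intro h
    apply hne
    have hpe : ∀ e, e ∈ p₁.edges ↔ e ∈ p₂.edges := by
      intro e
      have h' := Set.ext_iff.1 h (Sym2.map f e)
      have hinj := Sym2.map.injective hf
      simpa [Walk.edges_map, List.mem_map, hinj.eq_iff] using h'
    ext e
    simp [he1, he2, hpe])
  rintro u ⟨hu1, hu2⟩ v ⟨hv1, hv2⟩
  rw [hs1, List.mem_map] at hu1 hv1
  rw [hs2, List.mem_map] at hu2 hv2
  obtain ⟨u1, hu1, rfl⟩ := hu1
  obtain ⟨u2, hu2, hu⟩ := hu2
  obtain rfl := Subtype.val_injective hu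
  obtain ⟨v1, hv1, rfl⟩ := hv1
  obtain ⟨v2, hv2, hv⟩ := hv2
  obtain rfl := Subtype.val_injective hv
  congr 1
  apply hf
  apply this
  · exact ⟨by rw [Walk.support_map]; exact List.mem_map_of_mem hu1,
      by rw [Walk.support_map]; exact List.mem_map_of_mem hu2⟩
  · exact ⟨by rw [Walk.support_map]; exact List.mem_map_of_mem hv1,
      by rw [Walk.support_map]; exact List.mem_map_of_mem hv2⟩

lemma piece_of_comp {V V' : Type} {G : SimpleGraph V} (hG : G.Connected) {G' : SimpleGraph V'}
    {x : V} {x' : V'} (H : (delVert G' x').ConnectedComponent)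
    (φ : G ≃g G'.induce (xCompSet G' x' H)) (hx : (φ x : ↥(xCompSet G' x' H)).1 = x') :
    Piece G' (xCompSet G' x' H) x' := by
  refine ⟨Set.mem_insert _ _, ?_, ?_⟩
  · intro v hv
    let f : G →g res G' (xCompSet G' x' H) :=
      ⟨fun v => (φ v).1, fun {u v} h => ⟨φ.map_rel_iff.2 h, (φ u).2, (φ v).2⟩⟩
    have h := (hG.preconnected x (φ.symm ⟨v, hv⟩)).map f
    have e1 : f x = x' := hx
    have e2 : f (φ.symm ⟨v, hv⟩) = v := by
      show (φ (φ.symm ⟨v, hv⟩)).1 = v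
      rw [φ.apply_symm_apply]
    rwa [e1, e2] at h
  · intro u hu hne v hv
    rcases hu with rfl | ⟨u', hu', rfl⟩
    · exact (hne rfl).elim
    by_cases hvx : v = x'
    · exact Or.inl hvx
    · right
      refine ⟨⟨v, hvx⟩, ?_, rfl⟩
      have hadj : (delVert G' x').Adj u' ⟨v, hvx⟩ := hv
      rw [ConnectedComponent.mem_supp_iff] at hu' ⊢
      rw [← hu']
      exact (ConnectedComponent.sound hadj.reachable).symm

lemma xComp_ne {V' : Type} {G' : SimpleGraph V'}
    {x' : V'} (H : (delVert G' x').ConnectedComponent) : xCompSet G' x' H ≠ {x'} := by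
  intro h
  obtain ⟨v, hv⟩ := H.nonempty_supp
  have : v.1 ∈ xCompSet G' x' H := Or.inr ⟨v, hv, rfl⟩
  rw [h] at this
  exact v.2 this

lemma fam_transfer {V V' : Type} [Fintype V] [Fintype V'] {G : SimpleGraph V}
    {G' : SimpleGraph V'} {S : Set V'} (φ : G ≃g G'.induce S) {x : V} {x' : V'}
    (hx : (φ x).1 = x') {s : ℕ} {𝓕 : Set (V' → ℕ)} (hF : Fam (res G' S) S x' s 𝓕) :
    Fam G Set.univ x s ((fun C v => C (φ v).1) '' 𝓕) := by
  have hinj : Function.Injective (fun v => (φ v).1) :=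
    fun u v h => φ.injective (Subtype.val_injective h)
  have hrange : ∀ v', v' ∉ Set.range (fun v => (φ v).1) → v' ∉ S := by
    intro v' h hS
    exact h ⟨φ.symm ⟨v', hS⟩, by simp⟩
  have hmv : ∀ C ∈ 𝓕, ∀ C' ∈ 𝓕, ∀ m, Mv (res G' S) C C' m →
      Mv G (fun v => C (φ v).1) (fun v => C' (φ v).1) (fun u v => m (φ u).1 (φ v).1) := by
    intro C hC C' hC' m hm
    refine ⟨fun u => ?_, fun v => ?_, fun u v h => ?_⟩
    · beta_reduce
      rw [← hm.1]
      refine Fintype.sum_of_injective _ hinj _ _ (fun v' hv' => ?_) (fun _ => rfl)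
      have h1 := hF.off C' hC' v' (hrange v' hv')
      rw [← hm.2.1] at h1
      exact Finset.sum_eq_zero_iff.1 h1 _ (Finset.mem_univ _)
    · beta_reduce
      rw [← hm.2.1]
      refine Fintype.sum_of_injective _ hinj _ (fun u => m u (φ v).1) (fun v' hv' => ?_)
        (fun _ => rfl)
      have h1 := hF.off C hC v' (hrange v' hv')
      rw [← hm.1] at h1
      exact Finset.sum_eq_zero_iff.1 h1 _ (Finset.mem_univ _)
    · rcases hm.2.2 _ _ h with h1 | h1
      · exact Or.inl (hinj h1)
      · exact Or.inr (φ.map_rel_iff.1 h1.1)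
  have hadj : ∀ u v, G.Adj u v → (res G' S).Adj (φ u).1 (φ v).1 := fun u v h =>
    ⟨φ.map_rel_iff.2 h, (φ u).2, (φ v).2⟩
  subst hx
  refine ⟨hF.ne.image _, ?_, ?_, ?_, ?_, ?_, ?_⟩
  · rintro _ ⟨C, hC, rfl⟩
    rw [← hF.sum C hC]
    exact Fintype.sum_of_injective _ hinj _ _ (fun v' hv' => hF.off C hC v' (hrange v' hv'))
      (fun _ => rfl)
  · rintro _ ⟨C, hC, rfl⟩
    exact hF.pos C hC
  · intro _ _ v hv; exact (hv (Set.mem_univ v)).elim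
  · rintro _ ⟨C, hC, rfl⟩ u v h
    exact hF.cover C hC _ _ (hadj u v h)
  · rintro _ ⟨C, hC, rfl⟩ u v h
    obtain ⟨C', hC', m, hm, h1, h2⟩ := hF.d1 C hC _ _ (hadj u v h)
    exact ⟨_, ⟨C', hC', rfl⟩, _, hmv C hC C' hC' m hm, h1, h2⟩
  · rintro _ ⟨C, hC, rfl⟩
    obtain ⟨C', hC', m, hm, h1, h2⟩ := hF.d2 C hC
    exact ⟨_, ⟨C', hC', rfl⟩, _, hmv C hC C' hC' m hm, h1, h2⟩

/-- The multiset with multiplicity function `C`. -/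
def toM {W : Type} [Fintype W] (C : W → ℕ) : Multiset W := ∑ w, C w • ({w} : Multiset W)

lemma mem_toM {W : Type} [Fintype W] (C : W → ℕ) (w : W) : w ∈ toM C ↔ C w ≠ 0 := by
  classical
  unfold toM
  rw [Multiset.mem_sum]
  constructor
  · rintro ⟨v, _, hv⟩
    by_cases h0 : C v = 0
    · simp [h0] at hv
    · have := Multiset.mem_of_mem_nsmul hv
      rw [Multiset.mem_singleton] at this
      subst this
      exact h0
  · intro h
    exact ⟨w, Finset.mem_univ _, by rw [Multiset.mem_nsmul]; simp [h]⟩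

lemma card_toM {W : Type} [Fintype W] (C : W → ℕ) : Multiset.card (toM C) = ∑ w, C w := by
  unfold toM
  simp

lemma validMove_toM {W : Type} [Fintype W] {H : SimpleGraph W} {C C' : W → ℕ} {m : W → W → ℕ}
    (h : Mv H C C' m) : ValidMove H (toM C) (toM C') (toM (fun p : W × W => m p.1 p.2)) := by
  have hmap : ∀ f : W × W → W, (toM (fun p : W × W => m p.1 p.2)).map f =
      ∑ p : W × W, m p.1 p.2 • ({f p} : Multiset W) := by
    intro f
    have := map_sum (Multiset.mapAddMonoidHom f)
      (fun p : W × W => m p.1 p.2 • ({p} : Multiset (W × W))) Finset.univ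
    refine this.trans (Finset.sum_congr rfl fun p _ => ?_)
    rw [map_nsmul]
    rfl
  refine ⟨?_, ?_, ?_⟩
  · rw [hmap, Fintype.sum_prod_type]
    unfold toM
    refine Finset.sum_congr rfl fun u _ => ?_
    rw [← h.1 u, Finset.sum_smul]
  · rw [hmap, Fintype.sum_prod_type_right]
    unfold toM
    refine Finset.sum_congr rfl fun v _ => ?_
    rw [← h.2.1 v, Finset.sum_smul]
  · rintro ⟨u, v⟩ hp
    rw [mem_toM] at hp
    exact h.2.2 u v hp

lemma defense_toM {W : Type} [Fintype W] {H : SimpleGraph W} {s : ℕ} {𝓕 : Set (W → ℕ)}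
    (ne : 𝓕.Nonempty) (sum : ∀ C ∈ 𝓕, ∑ v, C v = s)
    (cover : ∀ C ∈ 𝓕, ∀ u v, H.Adj u v → 1 ≤ C u ∨ 1 ≤ C v)
    (d : ∀ C ∈ 𝓕, ∀ u v, H.Adj u v → ∃ C' ∈ 𝓕, ∃ m, Mv H C C' m ∧ (m u v ≠ 0 ∨ m v u ≠ 0)) :
    IsDefense H s (toM '' 𝓕) := by
  refine ⟨ne.image _, ?_, ?_⟩
  · rintro _ ⟨C, hC, rfl⟩
    refine ⟨by rw [card_toM, sum C hC], fun u v h => ?_⟩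
    show u ∈ toM C ∨ v ∈ toM C
    rw [mem_toM, mem_toM]
    have := cover C hC u v h
    omega
  · rintro _ ⟨C, hC, rfl⟩ u v h
    obtain ⟨C', hC', m, hm, h1⟩ := d C hC u v h
    refine ⟨_, ⟨C', hC', rfl⟩, _, validMove_toM hm, ?_⟩
    rw [mem_toM, mem_toM]
    exact h1

open Classical in
/-- Configuration on the graph with a pendant vertex: `q` guards are moved from `x` to it. -/
noncomputable def extC {V : Type} (x : V) (C : V → ℕ) (q : ℕ) : Option V → ℕ
  | none => q
  | some v => if v = x then C v - q else C v

open Classical in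
/-- Movement on the graph with a pendant vertex. -/
noncomputable def extm {V : Type} (x : V) (m : V → V → ℕ) (q q' : ℕ) : Option V → Option V → ℕ
  | none, none => 0
  | none, some v => if v = x then q else 0
  | some u, none => if u = x then q' else 0
  | some u, some v => if u = x ∧ v = x then m u v - (q + q') else m u v

lemma sum_adjust {V : Type} [Fintype V] [DecidableEq V] (x : V) (f g : V → ℕ) (d : ℕ)
    (h : ∀ v, v ≠ x → g v = f v) (hx : g x + d = f x) : ∑ v, g v + d = ∑ v, f v := by
  have h1 := Finset.add_sum_erase Finset.univ g (Finset.mem_univ x)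
  have h2 := Finset.add_sum_erase Finset.univ f (Finset.mem_univ x)
  have h3 : ∑ v ∈ Finset.univ.erase x, g v = ∑ v ∈ Finset.univ.erase x, f v :=
    Finset.sum_congr rfl (fun v hv => h v (Finset.ne_of_mem_erase hv))
  omega

lemma addPendant_some {V : Type} {G : SimpleGraph V} {x u v : V} :
    (addPendant G x).Adj (some u) (some v) ↔ G.Adj u v := by
  simp only [addPendant, fromRel_adj]
  constructor
  · rintro ⟨_, (⟨a, b, h1, h2, h⟩ | ⟨h, _⟩) | (⟨a, b, h1, h2, h⟩ | ⟨h, _⟩)⟩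
    · cases h1; cases h2; exact h
    · cases h
    · cases h1; cases h2; exact h.symm
    · cases h
  · intro h
    exact ⟨fun e => h.ne (Option.some.inj e), Or.inl (Or.inl ⟨u, v, rfl, rfl, h⟩)⟩

lemma addPendant_none {V : Type} {G : SimpleGraph V} {x : V} {b : Option V} :
    (addPendant G x).Adj none b ↔ b = some x := by
  simp only [addPendant, fromRel_adj]
  constructor
  · rintro ⟨_, (⟨a, b, h1, h2, h⟩ | ⟨_, h⟩) | (⟨a, b, h1, h2, h⟩ | ⟨_, h⟩)⟩
    · cases h1
    · exact h
    · cases h2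
    · cases h
  · rintro rfl
    simp

lemma mv_ext {V : Type} [Fintype V] {G : SimpleGraph V} {x : V} {C C' : V → ℕ} {m : V → V → ℕ}
    (h : Mv G C C' m) {q q' : ℕ} (hq : q + q' ≤ m x x) :
    Mv (addPendant G x) (extC x C q) (extC x C' q') (extm x m q q') := by
  classical
  refine ⟨?_, ?_, ?_⟩
  · rintro (_ | u)
    · rw [Fintype.sum_option]
      simp [extm, extC]
    · rw [Fintype.sum_option]
      by_cases hu : u = x
      · subst hu
        have := sum_adjust u (m u) (fun v => extm u m q q' (some u) (some v)) (q + q')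
          (fun v hv => by simp [extm, hv]) (by simp [extm]; omega)
        rw [h.1 u] at this
        simp only [extC, extm] at this ⊢
        simp only [if_true] at this ⊢
        omega
      · simp [extm, extC, hu, h.1]
  · rintro (_ | v)
    · rw [Fintype.sum_option]
      simp [extm, extC]
    · rw [Fintype.sum_option]
      by_cases hv : v = x
      · subst hv
        have := sum_adjust v (fun u => m u v) (fun u => extm v m q q' (some u) (some v)) (q + q')
          (fun v hv => by simp [extm, hv]) (by simp [extm]; omega)
        rw [h.2.1 v] at this
        simp only [extC, extm] at this ⊢
        simp only [if_true] at this ⊢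
        omega
      · simp [extm, extC, hv, h.2.1]
  · rintro (_ | u) (_ | v) hm
    · exact Or.inl rfl
    · right
      rw [addPendant_none]
      by_cases hv : v = x
      · rw [hv]
      · simp [extm, hv] at hm
    · right
      rw [adj_comm, addPendant_none]
      by_cases hv : u = x
      · rw [hv]
      · simp [extm, hv] at hm
    · have hm' : m u v ≠ 0 := by
        intro h0
        apply hm
        simp [extm, h0]
      rcases h.2.2 u v hm' with rfl | h1
      · exact Or.inl rfl
      · exact Or.inr (addPendant_some.2 h1)

lemma pendant_defense {V : Type} [Fintype V] {G : SimpleGraph V} {x : V} {s : ℕ}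
    {𝓕 : Set (V → ℕ)} (hF : Fam G Set.univ x s 𝓕) :
    ∃ F, IsDefense (addPendant G x) s F := by
  classical
  refine ⟨_, defense_toM (𝓕 := {D | ∃ C ∈ 𝓕, ∃ q, q ≤ 1 ∧ q + 1 ≤ C x ∧ D = extC x C q})
    ?_ ?_ ?_ ?_⟩
  · obtain ⟨C, hC⟩ := hF.ne
    exact ⟨_, C, hC, 0, by omega, hF.pos C hC, rfl⟩
  · rintro _ ⟨C, hC, q, hq1, hq2, rfl⟩
    rw [Fintype.sum_option, ← hF.sum C hC, ← sum_adjust x C (fun v => extC x C q (some v)) q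
      (fun v hv => by simp [extC, hv]) (by simp [extC]; omega)]
    simp only [extC]
    omega
  · rintro _ ⟨C, hC, q, hq1, hq2, rfl⟩
    have hocc : ∀ v, 1 ≤ C v → 1 ≤ extC x C q (some v) := by
      intro v hv
      by_cases h : v = x
      · subst h
        simp [extC]; omega
      · simp [extC, h]; omega
    rintro (_ | u) (_ | v) h
    · exact (h.ne rfl).elim
    · rw [addPendant_none] at h
      cases h
      exact Or.inr (hocc x (by omega))
    · rw [adj_comm, addPendant_none] at h
      cases h
      exact Or.inl (hocc x (by omega))
    · exact (hF.cover C hC u v (addPendant_some.1 h)).imp (hocc u) (hocc v)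
  · rintro _ ⟨C, hC, q, hq1, hq2, rfl⟩
    have hp : ∃ C' ∈ {D | ∃ C ∈ 𝓕, ∃ q, q ≤ 1 ∧ q + 1 ≤ C x ∧ D = extC x C q},
        ∃ m, Mv (addPendant G x) (extC x C q) C' m ∧
          (m none (some x) ≠ 0 ∨ m (some x) none ≠ 0) := by
      rcases Nat.eq_zero_or_pos q with rfl | hqp
      · obtain ⟨C', hC', m, hm, h1, h2⟩ := hF.d2 C hC
        exact ⟨_, ⟨C', hC', 1, le_rfl, h1, rfl⟩, _, mv_ext hm (by omega), by simp [extm]⟩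
      · obtain rfl : q = 1 := by omega
        refine ⟨_, ⟨C, hC, 1, le_rfl, hq2, rfl⟩, _,
          mv_ext (m := fun u v => if u = v then C u else 0) ⟨?_, ?_, ?_⟩ ?_, by simp [extm]⟩
        · simp
        · simp
        · intro u v h
          left
          by_contra h1
          simp [h1] at h
        · simpa using hq2
    rintro (_ | u) (_ | v) h
    · exact (h.ne rfl).elim
    · rw [addPendant_none] at h
      cases h
      exact hp
    · rw [adj_comm, addPendant_none] at h
      cases h
      obtain ⟨C', hC', m, hm, h⟩ := hp
      exact ⟨C', hC', m, hm, h.symm⟩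
    · rw [addPendant_some] at h
      obtain ⟨C', hC', m, hm, h1, h2⟩ := hF.d1 C hC u v h
      refine ⟨_, ⟨C', hC', 0, by omega, hF.pos C' hC', rfl⟩, _, mv_ext hm (by omega), ?_⟩
      have e1 : extm x m q 0 (some u) (some v) = m u v := by
        have : ¬ (u = x ∧ v = x) := fun e => h.ne (e.1.trans e.2.symm)
        simp only [extm, if_neg this]
      have e2 : extm x m q 0 (some v) (some u) = m v u := by
        have : ¬ (v = x ∧ u = x) := fun e => h.ne (e.2.trans e.1.symm)
        simp only [extm, if_neg this]
      rw [e1, e2]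
      exact h1

lemma fam_defense {V : Type} [Fintype V] {G : SimpleGraph V} {x : V} {s : ℕ}
    {𝓕 : Set (V → ℕ)} (hF : Fam G Set.univ x s 𝓕) :
    ∃ F, IsDefense G s F ∧ ∀ C ∈ F, ∀ y ∈ ({x} : Set V), y ∈ C := by
  refine ⟨_, defense_toM hF.ne hF.sum hF.cover (fun C hC u v h => ?_), ?_⟩
  · obtain ⟨C', hC', m, hm, h1, _⟩ := hF.d1 C hC u v h
    exact ⟨C', hC', m, hm, h1⟩
  · rintro _ ⟨C, hC, rfl⟩ y hy
    rw [Set.mem_singleton_iff] at hy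
    subst hy
    rw [mem_toM]
    have := hF.pos C hC
    omega

/-- Every cactus graph satisfies the substructure property. -/
theorem cactus_substructure (V : Type) [Finite V] (G : SimpleGraph V)
    (hG : IsCactus G) : SubstructureProperty G := by
  intro x _ V' _ G' x' _ _ H φ hx C' hC'
  have := Fintype.ofFinite V
  have := Fintype.ofFinite V'
  obtain ⟨k, F, hF, hCF⟩ := hC'
  have P := piece_of_comp hG.1 H φ hx
  obtain ⟨a, ha, 𝓕, h𝓕⟩ := main_ind hF _ _ x' rfl P (cac_of_iso hG.2 φ)
  have hlb := total_lb P (xComp_ne H) hF ha C' hCF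
  have hT := fam_transfer φ hx h𝓕
  have h1 : evcOn G {x} ≤ a + 2 := Nat.sInf_le (fam_defense hT)
  have h2 : evc (addPendant G x) ≤ a + 2 := Nat.sInf_le (pendant_defense hT)
  constructor
  · intro _
    omega
  · intro h
    omega

end EVC
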